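/- Let Z = (S_Z, m_Z) and P = (S_P, m_P) be disjoint multisets contained in the strip 21/40 < Re s < 1 such that the set S_Z ∪ S_P has no accumulation points in ℂ off the line Re s = 21/40. Assume moreover that Z and P are symmetric with respect to the real axis, i.e. s ∈ S_Z iff conj(s) ∈ S_Z with m_Z(conj(s)) = m_Z(s), and likewise for P. Then there exists a completely multiplicative function χ : ℕ → {1, −1} and a meromorphic function F on the half-plane Re s > 21/40 such that F(s) = ζ_χ(s) = ∑_{n=1}^∞ χ(n) n^{-s} for Re s > 1, the zeros of F in the half-plane Re s > 21/40 are exactly the points of S_Z with the zero at s having multiplicity m_Z(s), and the poles of F are exactly the points of S_P with the pole at s having order m_P(s). -/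

import Mathlib

/-!
The function `F` is built as `exp A * G`, where `G` is a Weierstrass product with the prescribed
divisor and `A` is holomorphic on `Re s > 1 / 2`; the task is to make `exp A * G` an Euler product
with signs.

*The product.* Let `d ρ` be the prescribed order at `ρ`. The factor attached to `ρ` is the `d ρ`-th
power of the Weierstrass elementary factor of genus `K ρ` in the variable `1 / (s - ρ + 1)`, which
equals `1` exactly at `s = ρ` (`Helson.factor`, `Helson.product_local`). For `Re s > 1` its logarithm
is a Laplace transform, and if the genera grow fast enough these add up to
`log G(s) = ∫ h(u) e^(-su) du` over `u > 0` with `|h(u)| ≤ e^u η(⌊u⌋)`, for any weight `η` given in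
advance that decays more slowly than every exponential. The symmetry about the real axis makes `h`
real (`Helson.exists_kernel`).

*From integrals to primes.* For `u ∈ [n, n + 1]`, the exponential `e^(-su)` is within `O(e^(-2n))` of
a linear combination of the values `p^(-s)` at primes `p` of size `e^(n + O(1))`, with coefficients
bounded by `e^(-n + o(n))` (`Helson.exists_approx`). The combination comes from Lagrange
interpolation of `t ↦ e^(-st)` at the nodes `log p`, averaged over about `e^n / n^3` disjoint systems
of nodes; the nodes of a system form a bounded number of clusters, so that only Chebyshev's bounds
for the number of primes are needed. Integrating against `h` shows that `log G` differs by a function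
holomorphic on `Re s > 0` from a Dirichlet series over primes with real coefficients in `[-1, 1]`
(`Helson.prime_transform`).

*Signs.* The coefficients are rounded greedily to `±1` with bounded partial sums of the differences,
so the change continues to `Re s > 0` by Abel summation. The signs define a completely multiplicative
`χ`, and the higher prime powers contribute to `log ζ_χ` a function holomorphic on `Re s > 1 / 2`
(`Helson.exists_chi`). Hence `ζ_χ = exp A * G` on `Re s > 1`.
-/

open Complex Filter Set

/-- A completely multiplicative function: `χ 1 = 1` and `χ (m*n) = χ m * χ n`. -/
def CompletelyMultiplicative (χ : ℕ → ℂ) : Prop :=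
  χ 1 = 1 ∧ ∀ m n : ℕ, χ (m * n) = χ m * χ n

/-- The Helson zeta function `ζ_χ(s) = ∑_{n ≥ 1} χ(n) n^{-s}`. -/
noncomputable def helsonZeta (χ : ℕ → ℂ) (s : ℂ) : ℂ :=
  ∑' n : ℕ, χ (n + 1) * ((n : ℂ) + 1) ^ (-s)

/-- `F` has a zero of multiplicity `k` at `s`. -/
def ZeroOfOrder (F : ℂ → ℂ) (s : ℂ) (k : ℕ) : Prop :=
  ∃ g : ℂ → ℂ, AnalyticAt ℂ g s ∧ g s ≠ 0 ∧ ∀ᶠ z in nhds s, F z = (z - s) ^ k * g z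

/-- `F` has a pole of order `k` at `s`. -/
def PoleOfOrder (F : ℂ → ℂ) (s : ℂ) (k : ℕ) : Prop :=
  ∃ g : ℂ → ℂ, AnalyticAt ℂ g s ∧ g s ≠ 0 ∧
    ∀ᶠ z in nhdsWithin s {s}ᶜ, F z = (z - s) ^ (-(k : ℤ)) * g z

namespace Helson

/-! ### Lagrange interpolation of exponentials -/

/-- The Taylor tail of the real exponential. -/
lemma exp_sub_sum_le {x : ℝ} (hx : 0 ≤ x) (n : ℕ) :
    Real.exp x - ∑ m ∈ Finset.range n, x ^ m / m.factorial
      ≤ x ^ n / n.factorial * Real.exp x := by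
  have h : HasSum (fun i : ℕ => x ^ i / (i.factorial : ℝ)) (Real.exp x) := by
    rw [Real.exp_eq_exp_ℝ]
    exact NormedSpace.expSeries_div_hasSum_exp x
  have h1 := (hasSum_nat_add_iff' n).2 h
  have h2 := h.mul_left (x ^ n / n.factorial)
  refine hasSum_le (fun i => ?_) h1 h2
  have hf : ((n.factorial : ℝ) * i.factorial) ≤ ((i + n).factorial : ℝ) := by
    have := Nat.factorial_mul_factorial_dvd_factorial_add n i
    rw [add_comm n i] at this
    exact_mod_cast Nat.le_of_dvd (Nat.factorial_pos _) this
  rw [div_mul_div_comm, ← pow_add, add_comm n i]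
  gcongr

lemma norm_cexp_sub_sum_le (z : ℂ) (n : ℕ) {r : ℝ} (hr : ‖z‖ ≤ r) :
    ‖Complex.exp z - ∑ m ∈ Finset.range n, z ^ m / m.factorial‖
      ≤ r ^ n / n.factorial * Real.exp r := by
  have h1 := Complex.norm_exp_sub_sum_le_exp_norm_sub_sum z n
  have h2 := exp_sub_sum_le (norm_nonneg z) n
  have hr0 : 0 ≤ r := (norm_nonneg z).trans hr
  refine (h1.trans h2).trans ?_
  gcongr

/-- Value at `u` of the Lagrange basis polynomial attached to the node `t i`. -/
noncomputable def lag {ι : Type*} [Fintype ι] [DecidableEq ι] (t : ι → ℝ) (i : ι) (u : ℝ) : ℝ :=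
  ∏ j ∈ Finset.univ.erase i, ((t i - t j)⁻¹ * (u - t j))

lemma continuous_lag {ι : Type*} [Fintype ι] [DecidableEq ι] (t : ι → ℝ) (i : ι) :
    Continuous (lag t i) := by
  unfold lag
  fun_prop

lemma lag_eq_eval {ι : Type*} [Fintype ι] [DecidableEq ι] (t : ι → ℝ) (i : ι) (u : ℝ) :
    lag t i u = (Lagrange.basis Finset.univ t i).eval u := by
  simp [lag, Lagrange.basis, Polynomial.eval_prod, Lagrange.basisDivisor]

lemma sum_lag_mul_pow {ι : Type*} [Fintype ι] [DecidableEq ι] (t : ι → ℝ)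
    (ht : Function.Injective t) (x u : ℝ) {k : ℕ} (hk : k < Fintype.card ι) :
    ∑ i, lag t i u * (t i - x) ^ k = (u - x) ^ k := by
  have h := Lagrange.eq_interpolate (s := Finset.univ) (v := t)
    (f := ((Polynomial.X - Polynomial.C x) ^ k : Polynomial ℝ)) (ht.injOn) (by
      rw [Polynomial.degree_pow, Polynomial.degree_X_sub_C]
      simpa using hk)
  have h2 := congrArg (Polynomial.eval u) h
  rw [Lagrange.interpolate_apply, Polynomial.eval_finsetSum] at h2
  simp only [Polynomial.eval_pow, Polynomial.eval_sub, Polynomial.eval_X, Polynomial.eval_C,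
    Polynomial.eval_mul, ← lag_eq_eval] at h2
  rw [h2]
  exact Finset.sum_congr rfl fun i _ => mul_comm _ _

/-- Interpolating `u ↦ exp (-s u)` at real nodes: the error is controlled by the Lebesgue
constant and the Taylor remainder of the exponential. -/
lemma lag_exp_bound {ι : Type*} [Fintype ι] [DecidableEq ι] (t : ι → ℝ)
    (ht : Function.Injective t) {x u H R lam : ℝ} (hx : 0 ≤ x) (hu : |u - x| ≤ H)
    (htH : ∀ i, |t i - x| ≤ H) (hlam : ∀ i, |lag t i u| ≤ lam) {s : ℂ} (hs : 0 ≤ s.re)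
    (hsR : ‖s‖ ≤ R) :
    ‖Complex.exp (-s * u) - ∑ i, (lag t i u : ℂ) * Complex.exp (-s * t i)‖
      ≤ (1 + Fintype.card ι * lam) *
        ((R * H) ^ Fintype.card ι / (Fintype.card ι).factorial * Real.exp (R * H)) := by
  set D := Fintype.card ι with hD
  set M := (R * H) ^ D / D.factorial * Real.exp (R * H) with hM
  have hH : 0 ≤ H := (abs_nonneg _).trans hu
  have hR : 0 ≤ R := (norm_nonneg _).trans hsR
  have hM0 : 0 ≤ M := by positivity
  -- the Taylor remainder of `exp (-s (y - x))`
  let r : ℝ → ℂ := fun y => Complex.exp (-s * ((y - x : ℝ) : ℂ)) -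
    ∑ m ∈ Finset.range D, (-s * ((y - x : ℝ) : ℂ)) ^ m / m.factorial
  have hr : ∀ y : ℝ, |y - x| ≤ H → ‖r y‖ ≤ M := by
    intro y hy
    refine norm_cexp_sub_sum_le _ D ?_
    rw [norm_mul, norm_neg, Complex.norm_real, Real.norm_eq_abs]
    gcongr
  have hexp : ∀ y : ℝ, Complex.exp (-s * y) = Complex.exp (-s * x) *
      (r y + ∑ m ∈ Finset.range D, (-s * ((y - x : ℝ) : ℂ)) ^ m / m.factorial) := by
    intro y
    simp only [r, sub_add_cancel]
    rw [← Complex.exp_add]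
    congr 1
    push_cast
    ring
  have hpoly : ∑ i, (lag t i u : ℂ) *
      ∑ m ∈ Finset.range D, (-s * ((t i - x : ℝ) : ℂ)) ^ m / m.factorial
      = ∑ m ∈ Finset.range D, (-s * ((u - x : ℝ) : ℂ)) ^ m / m.factorial := by
    simp_rw [Finset.mul_sum]
    rw [Finset.sum_comm]
    refine Finset.sum_congr rfl fun m hm => ?_
    have h := sum_lag_mul_pow t ht x u (Finset.mem_range.1 hm)
    rw [mul_pow, ← Complex.ofReal_pow, ← h]
    push_cast
    rw [Finset.mul_sum, Finset.sum_div]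
    refine Finset.sum_congr rfl fun i _ => ?_
    rw [mul_pow]
    ring
  have key : Complex.exp (-s * u) - ∑ i, (lag t i u : ℂ) * Complex.exp (-s * t i)
      = Complex.exp (-s * x) * (r u - ∑ i, (lag t i u : ℂ) * r (t i)) := by
    rw [hexp u, ← hpoly]
    simp_rw [hexp (t _), mul_add, Finset.mul_sum, Finset.sum_add_distrib, mul_sub, Finset.mul_sum]
    have e1 : ∀ i, (lag t i u : ℂ) * (Complex.exp (-s * x) * r (t i)) =
      Complex.exp (-s * x) * ((lag t i u : ℂ) * r (t i)) := fun i => by ring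
    have e2 : ∀ i m, (lag t i u : ℂ) * (Complex.exp (-s * x) *
      ((-s * ((t i - x : ℝ) : ℂ)) ^ m / m.factorial)) =
      Complex.exp (-s * x) * ((lag t i u : ℂ) * ((-s * ((t i - x : ℝ) : ℂ)) ^ m / m.factorial)) :=
      fun i m => by ring
    simp_rw [e1, e2]
    ring
  rw [key, norm_mul]
  have h1 : ‖Complex.exp (-s * x)‖ ≤ 1 := by
    rw [Complex.norm_exp]
    simp only [Real.exp_le_one_iff, mul_re, neg_re, ofReal_re, neg_im, ofReal_im, mul_zero, sub_zero]
    nlinarith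
  have h2 : ‖r u - ∑ i, (lag t i u : ℂ) * r (t i)‖ ≤ (1 + D * lam) * M := by
    refine (norm_sub_le _ _).trans ?_
    have h3 : ‖∑ i, (lag t i u : ℂ) * r (t i)‖ ≤ ∑ _i : ι, lam * M := by
      refine (norm_sum_le _ _).trans (Finset.sum_le_sum fun i _ => ?_)
      rw [norm_mul, Complex.norm_real, Real.norm_eq_abs]
      exact mul_le_mul (hlam i) (hr _ (htH i)) (norm_nonneg _) ((abs_nonneg _).trans (hlam i))
    have h4 := hr u hu
    simp only [Finset.sum_const, Finset.card_univ, nsmul_eq_mul] at h3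
    calc _ ≤ M + D * (lam * M) := add_le_add h4 h3
      _ = _ := by ring
  calc _ ≤ 1 * ((1 + D * lam) * M) := mul_le_mul h1 h2 (norm_nonneg _) zero_le_one
    _ = _ := one_mul _

/-- Lebesgue-type bound for nodes arranged in `b` clusters of `m` points each: points in different
clusters are at distance at least `1`, points of the same cluster at distance at least `1 / W`. -/
lemma abs_lag_le {b m : ℕ} (t : Fin b × Fin m → ℝ) {u H W : ℝ} (hH : 1 ≤ H) (hW : 1 ≤ W)
    (hu : ∀ x, |u - t x| ≤ H)
    (hfar : ∀ x y, x.1 ≠ y.1 → 1 ≤ |t x - t y|)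
    (hnear : ∀ x y, x ≠ y → x.1 = y.1 → W⁻¹ ≤ |t x - t y|) (x : Fin b × Fin m) :
    |lag t x u| ≤ H ^ (b * m) * W ^ m := by
  have hW0 : 0 < W := by linarith
  unfold lag
  rw [Finset.abs_prod]
  have step : ∀ y ∈ Finset.univ.erase x, |(t x - t y)⁻¹ * (u - t y)|
      ≤ (if y.1 = x.1 then W else 1) * H := by
    intro y hy
    have hyx : y ≠ x := (Finset.mem_erase.1 hy).1
    rw [abs_mul, abs_inv]
    refine mul_le_mul ?_ (hu y) (abs_nonneg _) (by split_ifs <;> linarith)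
    split_ifs with h
    · have := hnear x y (Ne.symm hyx) h.symm
      exact inv_le_of_inv_le₀ hW0 this
    · have := hfar x y (fun e => h e.symm)
      exact inv_le_one_of_one_le₀ this
  refine (Finset.prod_le_prod (fun _ _ => abs_nonneg _) step).trans ?_
  have h1 : ∏ y ∈ Finset.univ.erase x, ((if y.1 = x.1 then W else 1) * H)
      ≤ ∏ y : Fin b × Fin m, ((if y.1 = x.1 then W else 1) * H) := by
    rw [← Finset.mul_prod_erase Finset.univ _ (Finset.mem_univ x)]
    refine le_mul_of_one_le_left (Finset.prod_nonneg fun y _ => ?_) ?_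
    · split_ifs <;> positivity
    · rw [if_pos rfl]
      nlinarith
  refine h1.trans (le_of_eq ?_)
  rw [Finset.prod_mul_distrib, mul_comm]
  congr 1
  · simp
  · rw [Fintype.prod_prod_type]
    simp only
    rw [Finset.prod_eq_single x.1]
    · simp
    · intro y _ hy; simp [hy]
    · simp

/-! ### Primes in logarithmic blocks -/

lemma twenty_le_exp_three : (20 : ℝ) ≤ Real.exp 3 := by
  have h := Real.exp_one_gt_d9
  have : Real.exp 3 = Real.exp 1 ^ 3 := by rw [← Real.exp_nat_mul]; norm_num
  rw [this]
  calc (20 : ℝ) ≤ 2.7182818283 ^ 3 := by norm_num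
    _ ≤ _ := by gcongr

lemma theta_sub_le {a b : ℝ} (hab : a ≤ b) (hb : 1 ≤ b) :
    Chebyshev.theta b - Chebyshev.theta a
      ≤ ((Nat.primeCounting ⌊b⌋₊ : ℝ) - Nat.primeCounting ⌊a⌋₊) * Real.log b := by
  rw [Chebyshev.theta_eq_sum_primesLE, Chebyshev.theta_eq_sum_primesLE,
    ← Nat.primesLE_card_eq_primeCounting, ← Nat.primesLE_card_eq_primeCounting]
  have hsub : Nat.primesLE ⌊a⌋₊ ⊆ Nat.primesLE ⌊b⌋₊ := by
    intro p hp
    rw [Nat.mem_primesLE] at hp ⊢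
    exact ⟨hp.1.trans (Nat.floor_le_floor hab), hp.2⟩
  rw [← Finset.sum_sdiff hsub, ← Nat.cast_sub (Finset.card_le_card hsub),
    ← Finset.card_sdiff_of_subset hsub, add_sub_cancel_right, ← nsmul_eq_mul]
  refine Finset.sum_le_card_nsmul _ _ _ fun p hp => ?_
  have hp' := Nat.mem_primesLE.1 (Finset.mem_sdiff.1 hp).1
  exact Real.log_le_log (by exact_mod_cast hp'.2.pos)
    ((Nat.cast_le.2 hp'.1).trans (Nat.floor_le (by linarith)))

/-- Chebyshev's bounds, in the form: the interval `(e^v, e^(v+3)]` contains at least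
`e^v / (v+3)` primes. -/
lemma primes_in_block : ∃ N₀ : ℕ, ∀ v : ℕ, N₀ ≤ v →
    Real.exp v / (v + 3) ≤ (Nat.primeCounting ⌊Real.exp (v + 3)⌋₊ : ℝ)
      - Nat.primeCounting ⌊Real.exp v⌋₊ := by
  refine ⟨80, fun v hv => ?_⟩
  have hv' : (80 : ℝ) ≤ v := by exact_mod_cast hv
  set x := Real.exp (v + 3) with hx
  set w := Real.exp (((v : ℝ) + 3) / 4) with hw
  have hw20 : 20 ≤ w := by
    have := Real.add_one_le_exp (((v : ℝ) + 3) / 4)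
    linarith
  have hwv : ((v : ℝ) + 3) / 4 ≤ w := by
    have := Real.add_one_le_exp (((v : ℝ) + 3) / 4)
    linarith
  have hxw : x = w ^ 4 := by
    rw [hx, hw, ← Real.exp_nat_mul]; congr 1; push_cast; ring
  have hx1 : 1 ≤ x := by rw [hx]; exact Real.one_le_exp (by linarith)
  have hlogx : Real.log x = v + 3 := Real.log_exp _
  have hsq : √x = w ^ 2 := by
    rw [hxw, show w ^ 4 = (w ^ 2) ^ 2 by ring]; exact Real.sqrt_sq (by positivity)
  have hev : x = Real.exp v * Real.exp 3 := by rw [hx, Real.exp_add]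
  have h20 := twenty_le_exp_three
  have hevpos := Real.exp_pos v
  have hx20 : Real.exp v ≤ x / 20 := by rw [hev]; rw [le_div_iff₀ (by norm_num)]; gcongr
  have hge := Chebyshev.theta_ge' hx1
  have hle := Chebyshev.theta_le_log4_mul_x hevpos.le
  have hlog2 := Real.log_two_gt_d9
  have hlog2' := Real.log_two_lt_d9
  have hlog4 : Real.log 4 ≤ 1.4 := by
    rw [show (4 : ℝ) = 2 ^ 2 by norm_num, Real.log_pow]; push_cast; linarith
  have hlogx2 : Real.log (x + 2) ≤ 2 + 4 * w := by
    have h1 : x + 2 ≤ 4 * x := by linarith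
    have h2 : Real.log (x + 2) ≤ Real.log (4 * x) := Real.log_le_log (by linarith) h1
    rw [Real.log_mul (by norm_num) (by positivity), hlogx] at h2
    linarith
  have hsqrt : 2 * √x * Real.log x ≤ 8 * w ^ 3 := by
    rw [hsq, hlogx]
    have : (v : ℝ) + 3 ≤ 4 * w := by linarith
    calc _ ≤ 2 * w ^ 2 * (4 * w) := by gcongr
      _ = _ := by ring
  have hbig : Real.exp v ≤ Chebyshev.theta x - Chebyshev.theta (Real.exp v) := by
    have h1 : Real.log 4 * Real.exp v ≤ 1.4 * (x / 20) := by gcongr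
    have h2 : (x - 1) * 0.69 ≤ (x - 1) * Real.log 2 := by
      apply mul_le_mul_of_nonneg_left <;> linarith
    have h3 : 8 * w ^ 3 ≤ 0.4 * x := by
      rw [hxw]; nlinarith [pow_pos (show 0 < w by linarith) 3]
    have h4 : 2 + 4 * w ≤ 0.01 * x := by
      rw [hxw]
      have : w ^ 4 = w * w ^ 3 := by ring
      have h8 : (20 : ℝ) ^ 3 ≤ w ^ 3 := by gcongr
      nlinarith
    linarith
  have hfin := theta_sub_le (a := Real.exp v) (b := x) (by linarith) hx1
  rw [hlogx] at hfin
  rw [div_le_iff₀ (by positivity)]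
  linarith

lemma floor_lt_nth {x : ℝ} {k : ℕ} (h : Nat.primeCounting ⌊x⌋₊ ≤ k) :
    x < Nat.nth Nat.Prime k := by
  have : ⌊x⌋₊ < Nat.nth Nat.Prime k := by
    by_contra hlt
    push Not at hlt
    have h1 := Nat.count_monotone Nat.Prime (Nat.add_le_add_right hlt 1)
    rw [Nat.count_nth_succ_of_infinite Nat.infinite_setOfPred_prime] at h1
    simp only [Nat.primeCounting, Nat.primeCounting'] at h
    omega
  exact Nat.lt_of_floor_lt this

lemma nth_le_floor {x : ℝ} (hx : 0 ≤ x) {k : ℕ} (h : k < Nat.primeCounting ⌊x⌋₊) :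
    (Nat.nth Nat.Prime k : ℝ) ≤ x := by
  have : Nat.nth Nat.Prime k < ⌊x⌋₊ + 1 := Nat.nth_lt_of_lt_count (by
      simpa [Nat.primeCounting, Nat.primeCounting'] using h)
  exact (Nat.le_floor_iff hx).1 (by omega)

/-! ### Node systems of primes -/

/-- Among the primes between `e^n` and `e^(n+4b)` one finds about `e^n / n^3` disjoint node
systems, each made of `b` clusters of `m` primes; on the logarithmic scale clusters are `1`-separated
and the points of one cluster are `n^(-4)`-separated. Within a cluster, the members of a system are
primes whose indices differ by multiples of the number `Q` of systems. -/
lemma exists_nodes (b : ℕ) : ∀ᶠ n : ℕ in atTop, ∀ m : ℕ, 2 * m ≤ n →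
    ∃ (Q : ℕ) (q : Fin Q × (Fin b × Fin m) → ℕ), Real.exp n / (2 * n ^ 3) ≤ Q ∧ 0 < Q ∧
      Function.Injective q ∧ (∀ x, (q x).Prime) ∧
      (∀ x, (n : ℝ) ≤ Real.log (q x) ∧ Real.log (q x) ≤ n + 4 * b) ∧
      (∀ r x y, x.1 ≠ y.1 → 1 ≤ |Real.log (q (r, x)) - Real.log (q (r, y))|) ∧
      (∀ r x y, x ≠ y → x.1 = y.1 →
        ((n : ℝ) ^ 4)⁻¹ ≤ |Real.log (q (r, x)) - Real.log (q (r, y))|) := by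
  obtain ⟨N₀, hN₀⟩ := primes_in_block
  have hexp : ∀ᶠ n : ℕ in atTop, 2 * (n : ℝ) ^ 3 ≤ Real.exp n := by
    have h := (Real.tendsto_exp_div_pow_atTop 3).comp tendsto_natCast_atTop_atTop
    filter_upwards [h.eventually_ge_atTop 2, eventually_gt_atTop 0] with n hn hn0
    have : (0 : ℝ) < (n : ℝ) ^ 3 := by positivity
    simp only [Function.comp] at hn
    rwa [le_div_iff₀ this] at hn
  have hbig : ∀ᶠ n : ℕ in atTop, 2 * Real.exp (4 * b) ≤ n :=
    tendsto_natCast_atTop_atTop.eventually_ge_atTop _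
  filter_upwards [hexp, hbig, eventually_ge_atTop N₀, eventually_ge_atTop (4 * b + 3)] with
    n hn1 hn2 hn3 hn4 m hm
  have hn0 : (0 : ℝ) < n := by
    have : 0 < n := by omega
    exact_mod_cast this
  have hn1' : (1 : ℝ) ≤ n := by
    have : 1 ≤ n := by omega
    exact_mod_cast this
  have hepos := Real.exp_pos (n : ℝ)
  set Q := ⌊Real.exp n / (n : ℝ) ^ 3⌋₊ with hQ
  have hQle : (Q : ℝ) ≤ Real.exp n / (n : ℝ) ^ 3 := Nat.floor_le (by positivity)
  have hQge : Real.exp n / (2 * n ^ 3) ≤ Q := by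
    have h1 := Nat.lt_floor_add_one (Real.exp n / (n : ℝ) ^ 3)
    have h2 : (2 : ℝ) ≤ Real.exp n / (n : ℝ) ^ 3 := by rwa [le_div_iff₀ (by positivity)]
    have h3 : Real.exp n / (2 * n ^ 3) = Real.exp n / (n : ℝ) ^ 3 / 2 := by
      rw [div_div, mul_comm]
    rw [h3]
    rw [← hQ] at h1
    linarith
  have hQpos : 0 < Q := by
    have : (0 : ℝ) < Q := lt_of_lt_of_le (by positivity) hQge
    exact_mod_cast this
  -- the block of cluster `j` starts at `e ^ (n + 4 j)`; member `i` of system `r` is the prime with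
  -- offset `r + i Q` in that block
  let idx : Fin Q × (Fin b × Fin m) → ℕ := fun x =>
    Nat.primeCounting ⌊Real.exp ((n + 4 * x.2.1 : ℕ) : ℝ)⌋₊ + (x.1 + x.2.2 * Q)
  have hidx : ∀ x, idx x < Nat.primeCounting ⌊Real.exp (((n + 4 * x.2.1 : ℕ) : ℝ) + 3)⌋₊ := by
    rintro ⟨r, j, i⟩
    have h1 := hN₀ (n + 4 * j) (by omega)
    have h2 : ((r : ℕ) + i * Q : ℕ) < m * Q := by
      have : (i : ℕ) + 1 ≤ m := i.2
      calc (r : ℕ) + i * Q < Q + i * Q := by have := r.2; omega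
        _ = (i + 1) * Q := by ring
        _ ≤ m * Q := Nat.mul_le_mul_right _ this
    have h3 : ((m * Q : ℕ) : ℝ) ≤ Real.exp ((n + 4 * j : ℕ) : ℝ) / (((n + 4 * j : ℕ) : ℝ) + 3) := by
      have hm' : (2 : ℝ) * m ≤ n := by exact_mod_cast hm
      have e1 : ((m * Q : ℕ) : ℝ) ≤ (n / 2) * (Real.exp n / (n : ℝ) ^ 3) := by
        push_cast
        gcongr
        linarith
      have e2 : (n / 2 : ℝ) * (Real.exp n / (n : ℝ) ^ 3) = Real.exp n / (2 * n * n) := by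
        field_simp
      have e3 : Real.exp n / (2 * n * n) ≤ Real.exp n / (((n + 4 * j : ℕ) : ℝ) + 3) := by
        gcongr
        have : (((n + 4 * j : ℕ) : ℝ) + 3) ≤ 2 * n := by
          have := j.2
          exact_mod_cast (show n + 4 * j + 3 ≤ 2 * n by omega)
        nlinarith
      refine (e1.trans (e2.le.trans e3)).trans ?_
      gcongr
      omega
    have h4 : ((((r : ℕ) + i * Q : ℕ)) : ℝ) < ((m * Q : ℕ) : ℝ) := by exact_mod_cast h2
    have h5 : ((idx (r, j, i) : ℕ) : ℝ) <
        Nat.primeCounting ⌊Real.exp (((n + 4 * j : ℕ) : ℝ) + 3)⌋₊ := by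
      simp only [idx]
      push_cast at h1 h3 h4 ⊢
      linarith
    exact_mod_cast h5
  have hmono : StrictMono (Nat.nth Nat.Prime) := Nat.nth_strictMono Nat.infinite_setOfPred_prime
  let q : Fin Q × (Fin b × Fin m) → ℕ := fun x => Nat.nth Nat.Prime (idx x)
  have hprime : ∀ x, (q x).Prime := fun x => Nat.prime_nth_prime _
  have hqpos : ∀ x, (0 : ℝ) < q x := fun x => by exact_mod_cast (hprime x).pos
  have hlo : ∀ x, (n : ℝ) + 4 * (x.2.1 : ℕ) < Real.log (q x) := by
    intro x
    have := floor_lt_nth (x := Real.exp ((n + 4 * x.2.1 : ℕ) : ℝ)) (k := idx x) (by simp [idx])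
    rw [Real.lt_log_iff_exp_lt (hqpos x)]
    push_cast at this
    exact this
  have hhi : ∀ x, Real.log (q x) ≤ (n : ℝ) + 4 * (x.2.1 : ℕ) + 3 := by
    intro x
    have := nth_le_floor (Real.exp_pos _).le (hidx x)
    rw [Real.log_le_iff_le_exp (hqpos x)]
    push_cast at this
    exact this
  have hfar : ∀ x y : Fin Q × (Fin b × Fin m), x.2.1 ≠ y.2.1 →
      1 ≤ |Real.log (q x) - Real.log (q y)| := by
    intro x y hxy
    have hx1 := hlo x
    have hx2 := hhi x
    have hy1 := hlo y
    have hy2 := hhi y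
    rcases lt_or_gt_of_ne hxy with h | h
    · have : (x.2.1 : ℕ) + 1 ≤ (y.2.1 : ℕ) := h
      have : ((x.2.1 : ℕ) : ℝ) + 1 ≤ ((y.2.1 : ℕ) : ℝ) := by exact_mod_cast this
      rw [abs_sub_comm]
      refine le_trans ?_ (le_abs_self _)
      linarith
    · have : (y.2.1 : ℕ) + 1 ≤ (x.2.1 : ℕ) := h
      have : ((y.2.1 : ℕ) : ℝ) + 1 ≤ ((x.2.1 : ℕ) : ℝ) := by exact_mod_cast this
      refine le_trans ?_ (le_abs_self _)
      linarith
  have hnear : ∀ (r : Fin Q) (j : Fin b) (i i' : Fin m), i < i' →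
      ((n : ℝ) ^ 4)⁻¹ ≤ Real.log (q (r, j, i')) - Real.log (q (r, j, i)) := by
    intro r j i i' hii
    have h1 : q (r, j, i) + Q ≤ q (r, j, i') := by
      have h2 : Q + idx (r, j, i) ≤ idx (r, j, i') := by
        simp only [idx]
        have : (i : ℕ) + 1 ≤ i' := hii
        have := Nat.mul_le_mul_right Q this
        nlinarith
      have h3 := hmono.add_le_nat Q (idx (r, j, i))
      have h4 := hmono.monotone h2
      simp only [q]
      omega
    have h1' : (q (r, j, i) : ℝ) + Q ≤ q (r, j, i') := by exact_mod_cast h1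
    have hp := hqpos (r, j, i)
    have hp' := hqpos (r, j, i')
    rw [← Real.log_div hp'.ne' hp.ne']
    refine le_trans ?_ (Real.one_sub_inv_le_log_of_pos (div_pos hp' hp))
    rw [inv_div, one_sub_div hp'.ne']
    have hup : (q (r, j, i') : ℝ) ≤ Real.exp n * Real.exp (4 * b) := by
      rw [← Real.exp_add, ← Real.log_le_iff_le_exp hp']
      refine (hhi _).trans ?_
      have : (j : ℕ) + 1 ≤ b := j.2
      have : ((j : ℕ) : ℝ) + 1 ≤ b := by exact_mod_cast this
      simp only
      linarith
    calc ((n : ℝ) ^ 4)⁻¹ ≤ (Real.exp n / (2 * n ^ 3)) / (Real.exp n * Real.exp (4 * b)) := by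
          rw [div_div, inv_eq_one_div, div_le_div_iff₀ (by positivity) (by positivity)]
          have : 2 * Real.exp (4 * b) * (Real.exp n * n ^ 3) ≤ n * (Real.exp n * n ^ 3) := by gcongr
          calc _ = 2 * Real.exp (4 * b) * (Real.exp n * n ^ 3) := by ring
            _ ≤ _ := this
            _ = _ := by ring
      _ ≤ Q / (Real.exp n * Real.exp (4 * b)) := by gcongr
      _ ≤ Q / q (r, j, i') := by gcongr
      _ ≤ _ := by gcongr; linarith
  refine ⟨Q, q, hQge, hQpos, ?_, hprime, ?_, fun r x y h => hfar (r, x) (r, y) h, ?_⟩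
  · rintro ⟨r, j, i⟩ ⟨r', j', i'⟩ h
    have hj : j = j' := by
      by_contra hne
      have := hfar (r, j, i) (r', j', i') hne
      rw [h] at this
      simp at this
      linarith
    subst hj
    have h2 := hmono.injective h
    simp only [idx, add_right_inj] at h2
    have hr : (r : ℕ) = r' := by
      have := congrArg (· % Q) h2
      simpa [Nat.add_mul_mod_self_right, Nat.mod_eq_of_lt r.2, Nat.mod_eq_of_lt r'.2] using this
    have hi : (i : ℕ) = i' := by
      rw [hr] at h2
      exact Nat.eq_of_mul_eq_mul_right hQpos (by omega)
    rw [Fin.ext hr, Fin.ext hi]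
  · intro x
    have h1 := hlo x
    have h2 := hhi x
    have : (x.2.1 : ℕ) + 1 ≤ b := x.2.1.2
    have : ((x.2.1 : ℕ) : ℝ) + 1 ≤ b := by exact_mod_cast this
    have h0 : (0 : ℝ) ≤ (x.2.1 : ℕ) := by positivity
    constructor <;> linarith
  · rintro r ⟨j, i⟩ ⟨j', i'⟩ hne hj
    simp only at hj
    subst hj
    have hi : i ≠ i' := fun e => hne (by rw [e])
    rcases lt_or_gt_of_ne hi with h | h
    · rw [abs_sub_comm]
      exact (hnear r j i i' h).trans (le_abs_self _)
    · exact (hnear r j i' i h).trans (le_abs_self _)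

/-! ### Approximation of exponentials by prime powers `p ^ (-s)` -/

/-- Averaging the Lagrange interpolations over disjoint node systems produces coefficients that are
smaller by the number `Q` of systems, with the same error. -/
lemma average_nodes {Q B m : ℕ} (hQ : 0 < Q) (q : Fin Q × (Fin B × Fin m) → ℕ)
    (hq : Function.Injective q) (t : ℕ → ℝ) {lam err u : ℝ} (s : ℂ)
    (hlam : ∀ r y, |lag (fun z => t (q (r, z))) y u| ≤ lam) (hlam0 : 0 ≤ lam)
    (herr : ∀ r, ‖Complex.exp (-s * u) - ∑ y, (lag (fun z => t (q (r, z))) y u : ℂ) *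
      Complex.exp (-s * t (q (r, y)))‖ ≤ err) :
    (∀ p, |∑ y, if q y = p then lag (fun z => t (q (y.1, z))) y.2 u / Q else 0| ≤ lam / Q) ∧
    ‖Complex.exp (-s * u) - ∑ p ∈ Finset.univ.image q,
      ((∑ y, if q y = p then lag (fun z => t (q (y.1, z))) y.2 u / Q else 0 : ℝ) : ℂ) *
        Complex.exp (-s * t p)‖ ≤ err := by
  have hQ' : (0 : ℝ) < Q := by exact_mod_cast hQ
  constructor
  · intro p
    by_cases hp : ∃ y, q y = p
    · obtain ⟨y, rfl⟩ := hp
      have : ∀ z, (if q z = q y then lag (fun w => t (q (z.1, w))) z.2 u / Q else 0) =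
          if z = y then lag (fun w => t (q (y.1, w))) y.2 u / Q else 0 := by
        intro z
        by_cases h : z = y
        · subst h; simp
        · have h' : q z ≠ q y := fun e => h (hq e)
          simp [h, h']
      simp_rw [this]
      rw [Finset.sum_ite_eq' Finset.univ y]
      simp only [Finset.mem_univ, if_true]
      rw [abs_div, abs_of_pos hQ']
      gcongr
      exact hlam _ _
    · push Not at hp
      simp only [hp, if_false, Finset.sum_const_zero, abs_zero]
      positivity
  · have e1 : ∑ p ∈ Finset.univ.image q,
      ((∑ y, if q y = p then lag (fun z => t (q (y.1, z))) y.2 u / Q else 0 : ℝ) : ℂ) *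
        Complex.exp (-s * t p) = ∑ r : Fin Q, (Q : ℂ)⁻¹ *
          ∑ y, (lag (fun z => t (q (r, z))) y u : ℂ) * Complex.exp (-s * t (q (r, y))) := by
      rw [Finset.sum_image (fun a _ b _ h => hq h)]
      have : ∀ y, (∑ z, if q z = q y then lag (fun w => t (q (z.1, w))) z.2 u / Q else 0 : ℝ)
          = lag (fun w => t (q (y.1, w))) y.2 u / Q := by
        intro y
        rw [Finset.sum_eq_single y]
        · simp
        · intro z _ hz
          rw [if_neg (fun e => hz (hq e))]
        · simp
      simp_rw [this]
      rw [Fintype.sum_prod_type]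
      refine Finset.sum_congr rfl fun r _ => ?_
      rw [Finset.mul_sum]
      refine Finset.sum_congr rfl fun y _ => ?_
      push_cast
      ring
    have e2 : Complex.exp (-s * u) = ∑ _r : Fin Q, (Q : ℂ)⁻¹ * Complex.exp (-s * u) := by
      have : (Q : ℂ) ≠ 0 := by exact_mod_cast hQ.ne'
      simp only [Finset.sum_const, Finset.card_univ, Fintype.card_fin, nsmul_eq_mul]
      field_simp
    rw [e1, e2, ← Finset.sum_sub_distrib]
    simp_rw [← mul_sub]
    refine (norm_sum_le _ _).trans ?_
    have : ∀ r ∈ (Finset.univ : Finset (Fin Q)), ‖(Q : ℂ)⁻¹ * (Complex.exp (-s * u) -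
        ∑ y, (lag (fun z => t (q (r, z))) y u : ℂ) * Complex.exp (-s * t (q (r, y))))‖
        ≤ (Q : ℝ)⁻¹ * err := by
      intro r _
      rw [norm_mul, norm_inv, Complex.norm_natCast]
      gcongr
      exact herr r
    refine (Finset.sum_le_sum this).trans (le_of_eq ?_)
    simp only [Finset.sum_const, Finset.card_univ, Fintype.card_fin, nsmul_eq_mul]
    field_simp

/-- The size parameters: `m ≈ α n / log n`, so that `n ^ m ≈ e ^ (α n)`. -/
lemma exists_size {α : ℝ} (hα : 0 < α) (hα' : α ≤ 1 / 2) : ∀ᶠ n : ℕ in atTop, ∃ m : ℕ,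
    2 * m ≤ n ∧ (n : ℝ) ^ m ≤ Real.exp (α * n) ∧ Real.exp (α * n) ≤ (n : ℝ) ^ (2 * m) ∧
      n ≤ m ^ 2 ∧ 2 ≤ m := by
  have h1 : ∀ᶠ n : ℕ in atTop, Real.log n ≤ (α / 2) * (n : ℝ) ^ (1 / 2 : ℝ) :=
    (tendsto_natCast_atTop_atTop.eventually ((isLittleO_log_rpow_atTop
      (by norm_num : (0 : ℝ) < 1 / 2)).bound (half_pos hα))).mono (fun n hn => by
        simp only [Real.norm_eq_abs] at hn
        rw [abs_of_nonneg (by positivity : (0 : ℝ) ≤ (n : ℝ) ^ (1 / 2 : ℝ))] at hn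
        exact (le_abs_self _).trans hn)
  filter_upwards [h1, eventually_ge_atTop 16] with n hn hn16
  have hn16' : (16 : ℝ) ≤ n := by exact_mod_cast hn16
  have hn0 : (0 : ℝ) < n := by linarith
  have hlog : 1 ≤ Real.log n := by
    rw [Real.le_log_iff_exp_le hn0]
    have := Real.exp_one_lt_d9
    linarith
  have hsq : (n : ℝ) ^ (1 / 2 : ℝ) = Real.sqrt n := (Real.sqrt_eq_rpow _).symm
  rw [hsq] at hn
  have hs4 : 4 ≤ Real.sqrt n := by
    rw [Real.le_sqrt (by norm_num) hn0.le]; linarith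
  have hss : Real.sqrt n * Real.sqrt n = n := Real.mul_self_sqrt hn0.le
  set m := ⌊α * n / Real.log n⌋₊ with hm
  have hm1 : (m : ℝ) ≤ α * n / Real.log n := Nat.floor_le (by positivity)
  have hm2 : α * n / Real.log n < m + 1 := Nat.lt_floor_add_one _
  have hm1' : (m : ℝ) * Real.log n ≤ α * n := by rwa [le_div_iff₀ (by linarith)] at hm1
  have hm2' : α * n < (m + 1) * Real.log n := by rwa [div_lt_iff₀ (by linarith)] at hm2
  have hms : Real.sqrt n ≤ m := by
    have h2 : 2 * Real.sqrt n ≤ α * n / Real.log n := by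
      rw [le_div_iff₀ (by linarith)]
      calc 2 * Real.sqrt n * Real.log n ≤ 2 * Real.sqrt n * (α / 2 * Real.sqrt n) := by gcongr
        _ = α * (Real.sqrt n * Real.sqrt n) := by ring
        _ = α * n := by rw [hss]
    linarith
  have hm2le : (2 : ℝ) ≤ m := by linarith
  have hpow : ∀ k : ℕ, (n : ℝ) ^ k = Real.exp (k * Real.log n) := by
    intro k
    rw [mul_comm, Real.exp_mul, Real.exp_log hn0, Real.rpow_natCast]
  refine ⟨m, ?_, ?_, ?_, ?_, by exact_mod_cast hm2le⟩
  · have : (2 : ℝ) * m ≤ n := by nlinarith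
    exact_mod_cast this
  · rw [hpow]; exact Real.exp_le_exp.2 hm1'
  · rw [hpow]
    refine Real.exp_le_exp.2 ?_
    push_cast
    nlinarith
  · have : (n : ℝ) ≤ (m : ℝ) ^ 2 := by nlinarith
    exact_mod_cast this

lemma pow_le_factorial {n m b : ℕ} (hb : 1 ≤ b) (h : n ≤ m ^ 2) :
    n ^ (b * m) ≤ (4 * b * m).factorial := by
  have h1 := Nat.factorial_mul_pow_le_factorial (m := 2 * b * m) (n := 2 * b * m)
  calc n ^ (b * m) ≤ (m ^ 2) ^ (b * m) := Nat.pow_le_pow_left h _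
    _ = m ^ (2 * b * m) := by rw [← pow_mul]; ring_nf
    _ ≤ (2 * b * m + 1) ^ (2 * b * m) := Nat.pow_le_pow_left (by nlinarith) _
    _ ≤ (2 * b * m).factorial * (2 * b * m + 1) ^ (2 * b * m) :=
      Nat.le_mul_of_pos_left _ (Nat.factorial_pos _)
    _ ≤ (2 * b * m + 2 * b * m).factorial := h1
    _ = (4 * b * m).factorial := by congr 1; ring

/-- The combination `∑ c p u * p ^ (-s)` over the primes `p ∈ P` approximates `exp (-s u)` for
`u ∈ [n, n + 1]`, `0 ≤ Re s` and `‖s‖ ≤ R` up to `e ^ (-2 n)`, with coefficients of size at most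
`e ^ (ε n - n)`. -/
def IsLocalApprox (n : ℕ) (ε R : ℝ) (P : Finset ℕ) (c : ℕ → ℝ → ℝ) : Prop :=
  (∀ p ∈ P, p.Prime) ∧ (∀ p ∉ P, c p = 0) ∧ (∀ p, Continuous (c p)) ∧
    (∀ p, ∀ u ∈ Icc (n : ℝ) (n + 1), |c p u| ≤ Real.exp (ε * n) * Real.exp (-n)) ∧
    ∀ u ∈ Icc (n : ℝ) (n + 1), ∀ s : ℂ, 0 ≤ s.re → ‖s‖ ≤ R →
      ‖Complex.exp (-s * u) - ∑ p ∈ P, (c p u : ℂ) * Complex.exp (-s * Real.log p)‖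
        ≤ Real.exp (-2 * n)

/-- Local approximations exist for large `n`, with primes `p` of size `e ^ (n + O(1))`. Each system
has `B m` nodes with `m ≈ α n / log n`: the factorial `(B m)!` in the interpolation error makes that
error exponentially small, whereas the cluster structure bounds the Lagrange basis by
`n ^ (5 m) ≤ e ^ (5 α n)`. -/
lemma local_approx {ε R : ℝ} (hε : 0 < ε) (hR : 0 < R) : ∀ᶠ n : ℕ in atTop,
    ∃ P c, IsLocalApprox n ε R P c := by
  -- `α ≤ ε / 12` gives `n ^ (5 m) ≤ e ^ (ε n / 2)`. Of the power `n ^ (b m)` below the factorial, the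
  -- part `8 m` of the exponent absorbs the numerator and the part `2 k m` yields `e ^ (2 n)`.
  set α : ℝ := min (1 / 2) (ε / 12) with hα
  have hα0 : 0 < α := lt_min (by norm_num) (by positivity)
  have hα1 : α ≤ 1 / 2 := min_le_left _ _
  have hα2 : α ≤ ε / 12 := min_le_right _ _
  obtain ⟨k, hk⟩ := exists_nat_ge (2 / α)
  have hk' : 2 ≤ k * α := by rwa [div_le_iff₀ hα0] at hk
  set b : ℕ := 8 + 2 * k with hb
  set B : ℕ := 4 * b with hB
  set H : ℝ := 4 * B + 1 with hH
  have hH1 : 1 ≤ H := by rw [hH]; have : (0 : ℝ) ≤ B := B.cast_nonneg; linarith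
  have g : ∀ C : ℝ, ∀ᶠ n : ℕ in atTop, C ≤ n := fun C =>
    tendsto_natCast_atTop_atTop.eventually_ge_atTop C
  have hexp : ∀ᶠ n : ℕ in atTop, 2 * (n : ℝ) ^ 3 ≤ Real.exp (ε / 2 * n) := by
    have h := (tendsto_exp_mul_div_rpow_atTop 3 (ε / 2) (by positivity)).comp
      tendsto_natCast_atTop_atTop
    filter_upwards [h.eventually_ge_atTop 2, eventually_gt_atTop 0] with n hn hn0
    have : (0 : ℝ) < (n : ℝ) ^ 3 := by positivity
    simp only [Function.comp] at hn
    have e : (n : ℝ) ^ (3 : ℝ) = (n : ℝ) ^ 3 := by norm_cast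
    rwa [e, le_div_iff₀ this] at hn
  filter_upwards [exists_nodes B, exists_size hα0 hα1, hexp, g (H ^ B), g ((R * H) ^ B),
    g (2 * Real.exp (R * H)), g B, eventually_ge_atTop 1] with n hn1 ⟨m, hm1, hm2, hm3, hm4, hm5⟩ hn2
    hn3 hn4 hn5 hn6 hn7
  obtain ⟨Q, q, hQ, hQ0, hinj, hprime, hlog, hfar, hnear⟩ := hn1 m hm1
  have hn1R : (1 : ℝ) ≤ n := by exact_mod_cast hn7
  have hn0 : (0 : ℝ) < n := by linarith
  have hQR : (0 : ℝ) < Q := by exact_mod_cast hQ0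
  set lam : ℝ := (n : ℝ) ^ (5 * m) with hlamdef
  have hlam0 : 0 ≤ lam := by positivity
  have hlogB : ∀ x, |Real.log (q x) - n| ≤ H := by
    intro x
    have := hlog x
    rw [abs_le]
    constructor <;> linarith [this.1, this.2]
  have hlam : ∀ u ∈ Icc (n : ℝ) (n + 1), ∀ r y,
      |lag (fun z => Real.log (q (r, z))) y u| ≤ lam := by
    intro u hu r y
    have h := abs_lag_le (fun z => Real.log (q (r, z))) (u := u) (W := (n : ℝ) ^ 4) hH1
      (one_le_pow₀ hn1R) (fun x => by
        have := hlog (r, x)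
        rw [abs_le]
        constructor <;> linarith [this.1, this.2, hu.1, hu.2, (B.cast_nonneg : (0 : ℝ) ≤ B)])
      (hfar r) (hnear r) y
    refine h.trans ?_
    rw [pow_mul, ← pow_mul (n : ℝ) 4 m, hlamdef]
    calc (H ^ B) ^ m * (n : ℝ) ^ (4 * m) ≤ (n : ℝ) ^ m * (n : ℝ) ^ (4 * m) := by gcongr
      _ = (n : ℝ) ^ (5 * m) := by rw [← pow_add]; ring_nf
  have herr : ∀ u ∈ Icc (n : ℝ) (n + 1), ∀ s : ℂ, 0 ≤ s.re → ‖s‖ ≤ R → ∀ r,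
      ‖Complex.exp (-s * u) - ∑ y, (lag (fun z => Real.log (q (r, z))) y u : ℂ) *
        Complex.exp (-s * Real.log (q (r, y)))‖ ≤ Real.exp (-2 * n) := by
    intro u hu s hs hsR r
    have hti : Function.Injective (fun z => Real.log (q (r, z))) := by
      intro x y hxy
      by_contra hne
      have h0 : |Real.log (q (r, x)) - Real.log (q (r, y))| = 0 := by
        rw [abs_eq_zero, sub_eq_zero]; exact hxy
      by_cases h1 : x.1 = y.1
      · have := hnear r x y hne h1
        rw [h0] at this
        have : (0 : ℝ) < ((n : ℝ) ^ 4)⁻¹ := by positivity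
        linarith
      · have := hfar r x y h1
        rw [h0] at this
        linarith
    have h := lag_exp_bound (fun z => Real.log (q (r, z))) hti (x := n) (u := u) (H := H) (R := R)
      hn0.le (by rw [abs_le]; constructor <;> linarith [hu.1, hu.2])
      (fun y => hlogB (r, y)) (hlam u hu r) hs hsR
    refine h.trans ?_
    have hcard : Fintype.card (Fin B × Fin m) = B * m := by simp
    rw [hcard]
    have hm1R : (2 : ℝ) * m ≤ n := by exact_mod_cast hm1
    have hle : ∀ {i j : ℕ}, i ≤ j → (n : ℝ) ^ i ≤ (n : ℝ) ^ j :=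
      fun hij => pow_le_pow_right₀ hn1R hij
    have f1 : ((B * m : ℕ) : ℝ) ≤ (n : ℝ) ^ m := by
      calc ((B * m : ℕ) : ℝ) = (B : ℝ) * m := by push_cast; ring
        _ ≤ n * n := by
          have : (m : ℝ) ≤ n := by
            have : (0 : ℝ) ≤ m := m.cast_nonneg
            linarith
          gcongr
        _ = (n : ℝ) ^ 2 := by ring
        _ ≤ (n : ℝ) ^ m := hle hm5
    have f2 : (1 + ((B * m : ℕ) : ℝ) * lam) ≤ 2 * (n : ℝ) ^ (6 * m) := by
      have : ((B * m : ℕ) : ℝ) * lam ≤ (n : ℝ) ^ m * (n : ℝ) ^ (5 * m) := by gcongr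
      rw [← pow_add] at this
      have e : m + 5 * m = 6 * m := by ring
      rw [e] at this
      have := one_le_pow₀ hn1R (n := 6 * m)
      linarith
    have f3 : (R * H) ^ (B * m) ≤ (n : ℝ) ^ m := by
      rw [pow_mul]
      gcongr
    have f4 : (n : ℝ) ^ (b * m) ≤ ((B * m).factorial : ℝ) := by
      have := pow_le_factorial (n := n) (m := m) (b := b) (by omega) hm4
      exact_mod_cast this
    have f5 : (n : ℝ) ^ (8 * m) * Real.exp (2 * n) ≤ (n : ℝ) ^ (b * m) := by
      have e : b * m = 8 * m + (2 * m) * k := by rw [hb]; ring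
      rw [e, pow_add, pow_mul _ (2 * m) k]
      gcongr
      calc Real.exp (2 * n) ≤ Real.exp (k * (α * n)) := by
            apply Real.exp_le_exp.2
            nlinarith
        _ = Real.exp (α * n) ^ k := by rw [← Real.exp_nat_mul]
        _ ≤ _ := by gcongr
    have hfpos : (0 : ℝ) < ((B * m).factorial : ℝ) := by exact_mod_cast Nat.factorial_pos _
    have hRH : 0 ≤ R * H := by positivity
    calc (1 + ((B * m : ℕ) : ℝ) * lam) *
          ((R * H) ^ (B * m) / ((B * m).factorial : ℝ) * Real.exp (R * H))
        ≤ (2 * (n : ℝ) ^ (6 * m)) * ((n : ℝ) ^ m / ((B * m).factorial : ℝ) * Real.exp (R * H)) := by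
          gcongr
      _ = (2 * Real.exp (R * H)) * ((n : ℝ) ^ (6 * m) * (n : ℝ) ^ m) / ((B * m).factorial : ℝ) := by
          ring
      _ ≤ (n : ℝ) ^ m * ((n : ℝ) ^ (6 * m) * (n : ℝ) ^ m) / ((B * m).factorial : ℝ) := by
          gcongr
          calc _ ≤ (n : ℝ) := hn5
            _ = (n : ℝ) ^ 1 := (pow_one _).symm
            _ ≤ _ := hle (by omega)
      _ = (n : ℝ) ^ (8 * m) / ((B * m).factorial : ℝ) := by
          rw [← pow_add, ← pow_add]; ring_nf
      _ ≤ Real.exp (-2 * n) := by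
          rw [div_le_iff₀ hfpos]
          have : (n : ℝ) ^ (8 * m) = Real.exp (-2 * n) * ((n : ℝ) ^ (8 * m) * Real.exp (2 * n)) := by
            rw [mul_left_comm, ← Real.exp_add]; simp
          rw [this]
          gcongr
          exact f5.trans f4
  refine ⟨Finset.univ.image q, fun p u => ∑ y, if q y = p then
    lag (fun z => Real.log (q (y.1, z))) y.2 u / Q else 0, ?_, ?_, ?_, ?_, ?_⟩
  · intro p hp
    obtain ⟨y, _, rfl⟩ := Finset.mem_image.1 hp
    exact hprime y
  · intro p hp
    funext u
    simp only [Pi.zero_apply]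
    refine Finset.sum_eq_zero fun y _ => if_neg fun e => hp ?_
    exact Finset.mem_image.2 ⟨y, Finset.mem_univ _, e⟩
  · intro p
    refine continuous_finsetSum _ fun y _ => ?_
    split_ifs
    · exact (continuous_lag _ _).div_const _
    · exact continuous_const
  · intro p u hu
    have h := (average_nodes hQ0 q hinj (fun p => Real.log p) (lam := lam) (u := u)
      (s := 0) (hlam u hu) hlam0 (herr u hu 0 (by simp) (by simpa using hR.le))).1 p
    refine h.trans ?_
    have e1 : lam ≤ Real.exp (ε / 2 * n) := by
      rw [hlamdef, mul_comm, pow_mul]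
      calc ((n : ℝ) ^ m) ^ 5 ≤ (Real.exp (α * n)) ^ 5 := by gcongr
        _ = Real.exp (5 * (α * n)) := by rw [← Real.exp_nat_mul]; norm_num
        _ ≤ _ := Real.exp_le_exp.2 (by nlinarith)
    have e2 : Real.exp n / Real.exp (ε / 2 * n) ≤ Q := by
      refine le_trans ?_ hQ
      gcongr
    calc lam / Q ≤ Real.exp (ε / 2 * n) / (Real.exp n / Real.exp (ε / 2 * n)) := by gcongr
      _ = Real.exp (ε * n) * Real.exp (-n) := by
        rw [div_div_eq_mul_div, ← Real.exp_add, ← Real.exp_sub, ← Real.exp_add]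
        congr 1; ring
  · intro u hu s hs hsR
    exact (average_nodes hQ0 q hinj (fun p => Real.log p) (lam := lam) (u := u)
      (s := s) (hlam u hu) hlam0 (herr u hu s hs hsR)).2

/-- If each `A K` holds eventually, then `A (k n) n` holds eventually for some parameter choice `k`
tending to infinity. -/
lemma exists_diagonal {A : ℕ → ℕ → Prop} (h : ∀ K, ∀ᶠ n in atTop, A K n) :
    ∃ k : ℕ → ℕ, Tendsto k atTop atTop ∧ ∀ᶠ n in atTop, A (k n) n := by
  classical
  refine ⟨fun n => Nat.findGreatest (fun K => A K n) n, ?_, ?_⟩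
  · rw [tendsto_atTop]
    intro K
    filter_upwards [h K, eventually_ge_atTop K] with n hn hK
    exact Nat.le_findGreatest hK hn
  · filter_upwards [h 0] with n hn
    exact Nat.findGreatest_spec (P := fun K => A K n) (Nat.zero_le n) hn

lemma norm_cexp_neg_le_one {s : ℂ} (hs : 0 ≤ s.re) {x : ℝ} (hx : 0 ≤ x) :
    ‖Complex.exp (-s * x)‖ ≤ 1 := by
  rw [Complex.norm_exp]
  simp only [Real.exp_le_one_iff, mul_re, neg_re, ofReal_re, neg_im, ofReal_im, mul_zero, sub_zero]
  nlinarith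

/-- The local approximations for all `n` at once: the coefficient bound is `κ n * e ^ (-n)` with a
subexponential `κ`, and the error is `O (e ^ (-2 n))` uniformly for `s` in bounded subsets of the
right half-plane. -/
lemma exists_approx : ∃ (κ : ℕ → ℝ) (P : ℕ → Finset ℕ) (c : ℕ → ℕ → ℝ → ℝ),
    (∀ n, 0 < κ n) ∧ (∀ δ > 0, Tendsto (fun n : ℕ => κ n * Real.exp (-δ * n)) atTop (nhds 0)) ∧
    (∀ n, ∀ p ∈ P n, p.Prime) ∧ (∀ n, ∀ p ∉ P n, c n p = 0) ∧ (∀ n p, Continuous (c n p)) ∧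
    (∀ (n p : ℕ), ∀ u ∈ Icc (n : ℝ) (n + 1), |c n p u| ≤ κ n * Real.exp (-n)) ∧
    ∀ R : ℝ, ∃ C : ℝ, 0 ≤ C ∧ ∀ n : ℕ, ∀ u ∈ Icc (n : ℝ) (n + 1), ∀ s : ℂ, 0 ≤ s.re → ‖s‖ ≤ R →
        ‖Complex.exp (-s * u) - ∑ p ∈ P n, (c n p u : ℂ) * Complex.exp (-s * Real.log p)‖
          ≤ C * Real.exp (-2 * n) := by
  obtain ⟨k, hk, hA⟩ := exists_diagonal fun K : ℕ => local_approx (ε := 1 / ((K : ℝ) + 1))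
    (R := (K : ℝ) + 1) (by positivity) (by positivity)
  have hstep : ∀ n : ℕ, ∃ (P : Finset ℕ) (c : ℕ → ℝ → ℝ), (∀ p ∈ P, p.Prime) ∧
      (∀ p ∉ P, c p = 0) ∧ (∀ p, Continuous (c p)) ∧
      (∀ p, ∀ u ∈ Icc (n : ℝ) (n + 1), |c p u| ≤
        Real.exp (1 / ((k n : ℝ) + 1) * n) * Real.exp (-n)) ∧
      ((∃ P c, IsLocalApprox n (1 / ((k n : ℝ) + 1)) (k n + 1) P c) →
        IsLocalApprox n (1 / ((k n : ℝ) + 1)) (k n + 1) P c) := by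
    intro n
    by_cases h : ∃ P c, IsLocalApprox n (1 / ((k n : ℝ) + 1)) (k n + 1) P c
    · obtain ⟨P, c, hPc⟩ := h
      exact ⟨P, c, hPc.1, hPc.2.1, hPc.2.2.1, hPc.2.2.2.1, fun _ => hPc⟩
    · refine ⟨∅, 0, by simp, by simp, fun p => continuous_const, fun p u _ => ?_,
        fun h' => absurd h' h⟩
      simp only [Pi.zero_apply, abs_zero]
      positivity
  choose P c h1 h2 h3 h4 h5 using hstep
  refine ⟨fun n => Real.exp (1 / ((k n : ℝ) + 1) * n), P, c, fun n => Real.exp_pos _, ?_, h1, h2, h3,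
    h4, ?_⟩
  · intro δ hδ
    have hlim : Tendsto (fun n : ℕ => Real.exp (-(δ / 2) * n)) atTop (nhds 0) := by
      refine Real.tendsto_exp_atBot.comp ?_
      exact Tendsto.const_mul_atTop_of_neg (by linarith) tendsto_natCast_atTop_atTop
    obtain ⟨K, hK⟩ := exists_nat_ge (2 / δ)
    refine squeeze_zero' (Eventually.of_forall fun n => by positivity) ?_ hlim
    filter_upwards [hk.eventually_ge_atTop K] with n hn
    rw [← Real.exp_add]
    apply Real.exp_le_exp.2
    have hn' : (K : ℝ) ≤ k n := by exact_mod_cast hn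
    have h6 : 1 / ((k n : ℝ) + 1) ≤ δ / 2 := by
      rw [div_le_iff₀ (by positivity)]
      rw [div_le_iff₀ hδ] at hK
      nlinarith
    have := mul_le_mul_of_nonneg_right h6 (n.cast_nonneg : (0 : ℝ) ≤ n)
    linarith
  · intro R
    obtain ⟨K, hK⟩ := exists_nat_ge R
    obtain ⟨N, hN⟩ := eventually_atTop.1 (hA.and (hk.eventually_ge_atTop K))
    -- `E n` is the trivial bound for the relative error, used for the finitely many `n < N`
    set E : ℕ → ℝ := fun n => (1 + ∑ p ∈ P n, Real.exp (1 / ((k n : ℝ) + 1) * n) * Real.exp (-n)) *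
      Real.exp (2 * n) with hE
    have hE0 : ∀ n, 0 ≤ E n := fun n => by positivity
    refine ⟨1 + ∑ n ∈ Finset.range N, E n,
      add_nonneg zero_le_one (Finset.sum_nonneg fun n _ => hE0 n), fun n u hu s hs hsR => ?_⟩
    by_cases hn : N ≤ n
    · refine ((h5 n (hN n hn).1).2.2.2.2 u hu s hs ?_).trans ?_
      · have : (K : ℝ) ≤ k n := by exact_mod_cast (hN n hn).2
        linarith
      · refine le_mul_of_one_le_left (Real.exp_pos _).le ?_
        linarith [Finset.sum_nonneg fun n (_ : n ∈ Finset.range N) => hE0 n]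
    · have hu0 : 0 ≤ u := (n.cast_nonneg).trans hu.1
      have hb : ‖Complex.exp (-s * u) - ∑ p ∈ P n, (c n p u : ℂ) * Complex.exp (-s * Real.log p)‖
          ≤ 1 + ∑ p ∈ P n, Real.exp (1 / ((k n : ℝ) + 1) * n) * Real.exp (-n) := by
        refine (norm_sub_le _ _).trans (add_le_add (norm_cexp_neg_le_one hs hu0) ?_)
        refine (norm_sum_le _ _).trans (Finset.sum_le_sum fun p hp => ?_)
        rw [norm_mul, Complex.norm_real, Real.norm_eq_abs]
        have hp1 : 0 ≤ Real.log p := Real.log_natCast_nonneg p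
        calc _ ≤ (Real.exp (1 / ((k n : ℝ) + 1) * n) * Real.exp (-n)) * 1 :=
              mul_le_mul (h4 n p u hu) (norm_cexp_neg_le_one hs hp1) (norm_nonneg _) (by positivity)
          _ = _ := mul_one _
      have hEn : E n ≤ ∑ n ∈ Finset.range N, E n :=
        Finset.single_le_sum (fun i _ => hE0 i) (Finset.mem_range.2 (not_le.1 hn))
      have e : 1 + ∑ p ∈ P n, Real.exp (1 / ((k n : ℝ) + 1) * n) * Real.exp (-n)
          = E n * Real.exp (-2 * n) := by
        simp only [hE]
        rw [mul_assoc, ← Real.exp_add (2 * (n : ℝ)), neg_mul, add_neg_cancel, Real.exp_zero, mul_one]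
      rw [e] at hb
      refine hb.trans ?_
      gcongr
      linarith

/-! ### Laplace transforms as Dirichlet series over primes -/

open MeasureTheory in
lemma intervalIntegrable_of_bounded {f : ℝ → ℂ} (hf : Measurable f) {a b M : ℝ} (hab : a ≤ b)
    (hM : ∀ u ∈ Ioc a b, ‖f u‖ ≤ M) : IntervalIntegrable f volume a b := by
  rw [intervalIntegrable_iff_integrableOn_Ioc_of_le hab]
  refine Measure.integrableOn_of_bounded (M := M) (by simp) hf.aestronglyMeasurable ?_
  exact (ae_restrict_iff' measurableSet_Ioc).2 (Eventually.of_forall hM)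

open MeasureTheory in
lemma differentiable_integral_block {h : ℝ → ℂ} (hh : Measurable h) {a b M : ℝ} (ha : 0 ≤ a)
    (hab : a ≤ b) (hM : ∀ u ∈ Ioc a b, ‖h u‖ ≤ M) :
    Differentiable ℂ (fun s : ℂ => ∫ u in a..b, h u * Complex.exp (-s * u)) := by
  intro s₀
  have hmeas : ∀ s : ℂ, Measurable (fun u : ℝ => h u * Complex.exp (-s * u)) := fun s =>
    hh.mul (by fun_prop)
  have hb0 : 0 ≤ b := ha.trans hab
  have hexp : ∀ s : ℂ, ∀ u ∈ Ioc a b, ‖Complex.exp (-s * u)‖ ≤ Real.exp (‖s‖ * b) := by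
    intro s u hu
    have hu0 : 0 ≤ u := ha.trans hu.1.le
    refine (Complex.norm_exp_le_exp_norm _).trans (Real.exp_le_exp.2 ?_)
    rw [norm_mul, norm_neg, Complex.norm_real, Real.norm_of_nonneg hu0]
    exact mul_le_mul_of_nonneg_left hu.2 (norm_nonneg _)
  refine (intervalIntegral.hasDerivAt_integral_of_dominated_loc_of_deriv_le (μ := volume)
    (F := fun s u => h u * Complex.exp (-s * u))
    (F' := fun s u => h u * (Complex.exp (-s * u) * (-u)))
    (bound := fun _ => M * (Real.exp ((‖s₀‖ + 1) * b) * b))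
    (Metric.ball_mem_nhds s₀ one_pos) ?_ ?_ ?_ ?_ ?_ ?_).2.differentiableAt
  · exact Eventually.of_forall fun s => (hmeas s).aestronglyMeasurable
  · refine intervalIntegrable_of_bounded (hmeas s₀) hab (M := M * Real.exp (‖s₀‖ * b)) fun u hu => ?_
    rw [norm_mul]
    exact mul_le_mul (hM u hu) (hexp s₀ u hu) (norm_nonneg _) ((norm_nonneg _).trans (hM u hu))
  · exact (hh.mul (by fun_prop)).aestronglyMeasurable
  · refine Eventually.of_forall fun u hu s hs => ?_
    rw [uIoc_of_le hab] at hu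
    have hu0 : 0 ≤ u := ha.trans hu.1.le
    have hs' : ‖s‖ ≤ ‖s₀‖ + 1 := by
      have h1 : ‖s - s₀‖ < 1 := by simpa [dist_eq_norm] using hs
      have h2 := norm_add_le (s - s₀) s₀
      rw [sub_add_cancel] at h2
      linarith
    rw [norm_mul, norm_mul, norm_neg, Complex.norm_real, Real.norm_of_nonneg hu0]
    refine mul_le_mul (hM u hu) ?_ (by positivity) ((norm_nonneg _).trans (hM u hu))
    refine mul_le_mul ((hexp s u hu).trans (Real.exp_le_exp.2 ?_)) hu.2 hu0 (Real.exp_pos _).le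
    exact mul_le_mul_of_nonneg_right hs' hb0
  · exact intervalIntegrable_const
  · refine Eventually.of_forall fun u hu s hs => ?_
    have h1 : HasDerivAt (fun s : ℂ => -s * u) (-u) s := by
      simpa using ((hasDerivAt_id s).neg.mul_const (u : ℂ))
    exact (h1.cexp).const_mul _

/-- The weights `1 / ((n + 1) (n + 2))`, of total mass `1`. -/
lemma sum_weights_le (N : ℕ) :
    ∑ n ∈ Finset.range N, 1 / (((n : ℝ) + 1) * (n + 2)) ≤ 1 := by
  have : ∑ n ∈ Finset.range N, 1 / (((n : ℝ) + 1) * (n + 2)) = 1 - 1 / (N + 1) := by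
    induction N with
    | zero => simp
    | succ k ih =>
      rw [Finset.sum_range_succ, ih]
      push_cast
      field_simp
      ring
  rw [this]
  have : (0 : ℝ) ≤ 1 / (N + 1) := by positivity
  linarith

lemma summable_weights : Summable fun n : ℕ => 1 / (((n : ℝ) + 1) * (n + 2)) :=
  summable_of_sum_range_le (fun n => by positivity) sum_weights_le

lemma cexp_neg_mul_log {p : ℕ} (hp : p ≠ 0) (s : ℂ) :
    Complex.exp (-s * Real.log p) = (p : ℂ) ^ (-s) := by
  rw [Complex.cpow_def_of_ne_zero (by exact_mod_cast hp), Complex.natCast_log, mul_comm]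

lemma exists_nat_mem_Ioc {u : ℝ} (hu : 0 < u) : ∃ n : ℕ, u ∈ Ioc (n : ℝ) (n + 1) := by
  refine ⟨⌈u⌉₊ - 1, ?_, ?_⟩
  · have h1 := Nat.ceil_lt_add_one hu.le
    have h2 : 1 ≤ ⌈u⌉₊ := Nat.ceil_pos.2 hu
    push_cast [Nat.cast_sub h2]
    linarith
  · have h1 := Nat.le_ceil u
    have h2 : 1 ≤ ⌈u⌉₊ := Nat.ceil_pos.2 hu
    push_cast [Nat.cast_sub h2]
    linarith

open MeasureTheory in
/-- Splitting a Laplace transform into unit blocks. -/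
lemma hasSum_blocks {f : ℝ → ℂ} (hf : IntegrableOn f (Ioi 0)) :
    HasSum (fun n : ℕ => ∫ u in (n : ℝ)..(n + 1), f u) (∫ u in Ioi (0 : ℝ), f u) := by
  have hU : ⋃ n : ℕ, Ioc (n : ℝ) (n + 1) = Ioi 0 := by
    ext u
    simp only [mem_iUnion, mem_Ioc, mem_Ioi]
    constructor
    · rintro ⟨n, hn, _⟩
      exact (n.cast_nonneg).trans_lt hn
    · exact exists_nat_mem_Ioc
  have hd : Pairwise (Function.onFun Disjoint fun n : ℕ => Ioc (n : ℝ) (n + 1)) := by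
    intro i j hij
    simp only [Function.onFun]
    rw [Set.disjoint_left]
    intro u hu hu'
    rcases lt_or_gt_of_ne hij with h | h
    · have : (i : ℝ) + 1 ≤ j := by exact_mod_cast h
      linarith [hu.2, hu'.1]
    · have : (j : ℝ) + 1 ≤ i := by exact_mod_cast h
      linarith [hu'.2, hu.1]
  have := hasSum_integral_iUnion (f := f) (μ := volume) (fun n : ℕ => measurableSet_Ioc) hd
    (by rwa [hU])
  rw [hU] at this
  have e : ∀ n : ℕ, ∫ u in (n : ℝ)..(n + 1), f u = ∫ u in Ioc (n : ℝ) (n + 1), f u := fun n =>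
    intervalIntegral.integral_of_le (by linarith)
  simp_rw [e]
  exact this

open MeasureTheory in
lemma integrableOn_laplace {h : ℝ → ℂ} (hh : Measurable h)
    (hb : ∀ u > 0, ‖h u‖ ≤ Real.exp u) {s : ℂ} (hs : 1 < s.re) :
    IntegrableOn (fun u : ℝ => h u * Complex.exp (-s * u)) (Ioi 0) := by
  have h1 : IntegrableOn (fun u : ℝ => Real.exp (-(s.re - 1) * u)) (Ioi 0) :=
    integrableOn_exp_mul_Ioi (by linarith) 0
  refine Integrable.mono' h1 (hh.mul (by fun_prop)).aestronglyMeasurable ?_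
  refine (ae_restrict_iff' measurableSet_Ioi).2 (Eventually.of_forall fun u hu => ?_)
  rw [norm_mul, Complex.norm_exp]
  simp only [mul_re, neg_re, ofReal_re, neg_im, ofReal_im, mul_zero, sub_zero]
  calc _ ≤ Real.exp u * Real.exp (-s.re * u) := by gcongr; exact hb u hu
    _ = _ := by rw [← Real.exp_add]; congr 1; ring

lemma norm_laplace_kernel (s : ℂ) (u : ℝ) : ‖Complex.exp (-s * u)‖ = Real.exp (-s.re * u) := by
  rw [Complex.norm_exp]
  simp

open MeasureTheory in
/-- Every Laplace transform of a real function `h` with `|h u| ≤ e ^ u * η ⌊u⌋`, for a suitable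
subexponentially decaying `η`, agrees up to a function holomorphic on `Re s > 0` with a Dirichlet
series over primes with real coefficients in `[-1, 1]`. -/
lemma prime_transform : ∃ η : ℕ → ℝ, (∀ n, 0 < η n) ∧ (∀ n, η n ≤ 1) ∧
    (∀ δ > 0, Tendsto (fun n : ℕ => Real.exp (-δ * n) / η n) atTop (nhds 0)) ∧
    ∀ h : ℝ → ℝ, Measurable h → (∀ n : ℕ, ∀ u ∈ Ioc (n : ℝ) (n + 1), |h u| ≤ Real.exp u * η n) →
    ∃ (a : ℕ → ℝ) (A : ℂ → ℂ), (∀ p, ¬ p.Prime → a p = 0) ∧ (∀ p, |a p| ≤ 1) ∧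
      DifferentiableOn ℂ A {s | 0 < s.re} ∧
      ∀ s : ℂ, 1 < s.re → ∑' p : ℕ, (a p : ℂ) * (p : ℂ) ^ (-s) =
        A s + ∫ u in Ioi (0 : ℝ), (h u : ℂ) * Complex.exp (-s * u) := by
  obtain ⟨κ, P, c, hκ, hκlim, hP, hc0, hcc, hcb, herr⟩ := exists_approx
  have hDpos : ∀ n : ℕ, 0 < Real.exp 1 * (κ n + 1) * (((n : ℝ) + 1) * (n + 2)) := fun n => by
    have := hκ n
    positivity
  set η : ℕ → ℝ := fun n => 1 / (Real.exp 1 * (κ n + 1) * (((n : ℝ) + 1) * (n + 2))) with hη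
  have hη0 : ∀ n, 0 < η n := fun n => by have := hDpos n; positivity
  have hη1 : ∀ n, η n ≤ 1 := by
    intro n
    rw [hη]
    simp only
    rw [div_le_one (hDpos n)]
    have h1 : 1 ≤ Real.exp 1 := Real.one_le_exp zero_le_one
    have h2 : 1 ≤ κ n + 1 := by linarith [hκ n]
    have h3 : (1 : ℝ) ≤ ((n : ℝ) + 1) * (n + 2) := by
      have : (0 : ℝ) ≤ n := n.cast_nonneg
      nlinarith
    exact one_le_mul_of_one_le_of_one_le (one_le_mul_of_one_le_of_one_le h1 h2) h3
  refine ⟨η, hη0, hη1, ?_, ?_⟩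
  · intro δ hδ
    have hl1 := hκlim (δ / 2) (by linarith)
    have hl2 : Tendsto (fun n : ℕ => Real.exp (-(δ / 2) * n)) atTop (nhds 0) := by
      refine Real.tendsto_exp_atBot.comp ?_
      exact Tendsto.const_mul_atTop_of_neg (by linarith) tendsto_natCast_atTop_atTop
    have hl := ((hl1.add hl2).const_mul (Real.exp 1 * (2 / (δ / 2) ^ 2 * Real.exp δ)))
    rw [add_zero, mul_zero] at hl
    refine squeeze_zero (fun n => div_nonneg (Real.exp_pos _).le (hη0 n).le) (fun n => ?_) hl
    rw [hη, div_div_eq_mul_div, div_one]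
    have hn : (0 : ℝ) ≤ n := n.cast_nonneg
    have h1 : ((n : ℝ) + 1) * (n + 2) ≤ 2 / (δ / 2) ^ 2 * (Real.exp δ * Real.exp (δ / 2 * n)) := by
      have h2 := Real.quadratic_le_exp_of_nonneg (x := δ / 2 * (n + 2)) (by positivity)
      have h3 : Real.exp δ * Real.exp (δ / 2 * n) = Real.exp (δ / 2 * (n + 2)) := by
        rw [← Real.exp_add]; congr 1; ring
      rw [h3, div_mul_eq_mul_div, le_div_iff₀ (by positivity)]
      have h4 : 0 ≤ δ / 2 * (n + 2) := by positivity
      have h5 : ((n : ℝ) + 1) * (n + 2) ≤ (n + 2) ^ 2 := by nlinarith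
      nlinarith [mul_le_mul_of_nonneg_right h5 (sq_nonneg (δ / 2))]
    have hk := hκ n
    calc Real.exp (-δ * n) * (Real.exp 1 * (κ n + 1) * (((n : ℝ) + 1) * (n + 2)))
        ≤ Real.exp (-δ * n) * (Real.exp 1 * (κ n + 1) *
          (2 / (δ / 2) ^ 2 * (Real.exp δ * Real.exp (δ / 2 * n)))) := by gcongr
      _ = Real.exp 1 * (2 / (δ / 2) ^ 2 * Real.exp δ) *
          ((κ n + 1) * (Real.exp (-δ * n) * Real.exp (δ / 2 * n))) := by ring
      _ = _ := by
        rw [← Real.exp_add]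
        have : -δ * n + δ / 2 * n = -(δ / 2) * n := by ring
        rw [this]; ring
  intro h hh hb
  have hhC : Measurable fun u => (h u : ℂ) := by fun_prop
  have hbn : ∀ n : ℕ, ∀ u ∈ Ioc (n : ℝ) (n + 1), ‖(h u : ℂ)‖ ≤ Real.exp (n + 1) * η n := by
    intro n u hu
    rw [Complex.norm_real, Real.norm_eq_abs]
    refine (hb n u hu).trans ?_
    have := (hη0 n).le
    gcongr
    exact hu.2
  have hbg : ∀ u > 0, ‖(h u : ℂ)‖ ≤ Real.exp u := by
    intro u hu
    obtain ⟨n, hn⟩ := exists_nat_mem_Ioc hu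
    rw [Complex.norm_real, Real.norm_eq_abs]
    exact (hb n u hn).trans (mul_le_of_le_one_right (Real.exp_pos _).le (hη1 n))
  -- the contribution of the `n`-th block to the coefficient of the prime `p`
  set a : ℕ → ℕ → ℝ := fun n p => ∫ u in (n : ℝ)..(n + 1), h u * c n p u with ha
  have habound : ∀ n p, |a n p| ≤ 1 / (((n : ℝ) + 1) * (n + 2)) := by
    intro n p
    have h1 := intervalIntegral.norm_integral_le_of_norm_le_const (a := (n : ℝ)) (b := n + 1)
      (f := fun u => h u * c n p u) (C := Real.exp (n + 1) * η n * (κ n * Real.exp (-n)))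
      (fun u hu => by
        rw [uIoc_of_le (by linarith)] at hu
        rw [norm_mul]
        have h2 := hbn n u hu
        rw [Complex.norm_real] at h2
        have h3 := hcb n p u ⟨hu.1.le, hu.2⟩
        exact mul_le_mul h2 h3 (norm_nonneg _) ((norm_nonneg _).trans h2))
    rw [Real.norm_eq_abs] at h1
    refine h1.trans ?_
    have e1 : Real.exp ((n : ℝ) + 1) * Real.exp (-n) = Real.exp 1 := by
      rw [← Real.exp_add]; congr 1; ring
    have e2 : |(n : ℝ) + 1 - n| = 1 := by simp
    rw [e2, mul_one]
    have hk := hκ n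
    calc Real.exp (n + 1) * η n * (κ n * Real.exp (-n))
        = (Real.exp (n + 1) * Real.exp (-n)) * η n * κ n := by ring
      _ = Real.exp 1 * κ n * η n := by rw [e1]; ring
      _ ≤ Real.exp 1 * (κ n + 1) * η n := by
        have := (hη0 n).le
        gcongr
        linarith
      _ = _ := by
        rw [hη]
        simp only
        field_simp
  have hasum : ∀ p, Summable fun n => a n p := fun p =>
    Summable.of_norm_bounded summable_weights (fun n => habound n p)
  have ha0 : ∀ n p, p ∉ P n → a n p = 0 := by
    intro n p hp
    simp only [ha, hc0 n p hp, Pi.zero_apply, mul_zero, intervalIntegral.integral_zero]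
  set T : ℕ → ℂ → ℂ := fun n s => ∑ p ∈ P n, (a n p : ℂ) * Complex.exp (-s * Real.log p) -
    ∫ u in (n : ℝ)..(n + 1), (h u : ℂ) * Complex.exp (-s * u) with hT
  have hTdiff : ∀ n, Differentiable ℂ (T n) := by
    intro n
    refine Differentiable.sub ?_ (differentiable_integral_block hhC n.cast_nonneg (by linarith)
      (hbn n))
    fun_prop
  have hTbound : ∀ R : ℝ, ∃ C : ℝ, ∀ n : ℕ, ∀ s : ℂ, 0 ≤ s.re → ‖s‖ ≤ R →
      ‖T n s‖ ≤ C * Real.exp (-n) := by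
    intro R
    obtain ⟨C, hC0, hC⟩ := herr R
    refine ⟨Real.exp 1 * C, fun n s hs hsR => ?_⟩
    have hintg : ∀ s : ℂ, IntervalIntegrable (fun u : ℝ => (h u : ℂ) * Complex.exp (-s * u)) volume
        (n : ℝ) (n + 1) := by
      intro s
      have hfi : IntervalIntegrable (fun u : ℝ => (h u : ℂ)) volume (n : ℝ) (n + 1) :=
        intervalIntegrable_of_bounded hhC (by linarith) (hbn n)
      exact hfi.mul_continuousOn (by fun_prop)
    have hint2 : ∀ p ∈ P n, IntervalIntegrable (fun u : ℝ => (h u : ℂ) * ((c n p u : ℂ) *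
        Complex.exp (-s * Real.log p))) volume (n : ℝ) (n + 1) := by
      intro p _
      have hfi : IntervalIntegrable (fun u : ℝ => (h u : ℂ)) volume (n : ℝ) (n + 1) :=
        intervalIntegrable_of_bounded hhC (by linarith) (hbn n)
      have := hcc n p
      exact hfi.mul_continuousOn (by fun_prop)
    have e1 : T n s = - ∫ u in (n : ℝ)..(n + 1), (h u : ℂ) * (Complex.exp (-s * u) -
        ∑ p ∈ P n, (c n p u : ℂ) * Complex.exp (-s * Real.log p)) := by
      simp_rw [mul_sub, Finset.mul_sum]
      rw [intervalIntegral.integral_sub (hintg s)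
        (by simpa only [Finset.sum_fn] using IntervalIntegrable.sum (P n) hint2),
        intervalIntegral.integral_finsetSum hint2, neg_sub]
      simp only [hT]
      congr 1
      refine Finset.sum_congr rfl fun p _ => ?_
      simp_rw [← mul_assoc]
      rw [intervalIntegral.integral_mul_const]
      congr 1
      simp only [ha]
      rw [← intervalIntegral.integral_ofReal]
      simp
    rw [e1, norm_neg]
    have h1 := intervalIntegral.norm_integral_le_of_norm_le_const (a := (n : ℝ)) (b := n + 1)
      (f := fun u : ℝ => (h u : ℂ) * (Complex.exp (-s * u) -
        ∑ p ∈ P n, (c n p u : ℂ) * Complex.exp (-s * Real.log p)))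
      (C := Real.exp (n + 1) * (C * Real.exp (-2 * n)))
      (fun u hu => by
        rw [uIoc_of_le (by linarith)] at hu
        rw [norm_mul]
        refine mul_le_mul ((hbn n u hu).trans ?_) (hC n u ⟨hu.1.le, hu.2⟩ s hs hsR) (norm_nonneg _)
          (Real.exp_pos _).le
        exact mul_le_of_le_one_right (Real.exp_pos _).le (hη1 n))
    refine h1.trans (le_of_eq ?_)
    have e2 : |(n : ℝ) + 1 - n| = 1 := by simp
    rw [e2, mul_one, mul_left_comm, ← Real.exp_add, mul_comm (Real.exp 1) C, mul_assoc,
      ← Real.exp_add]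
    congr 2; ring
  have hexpsum : Summable fun n : ℕ => Real.exp (-n) := Real.summable_exp_neg_nat
  refine ⟨fun p => ∑' n, a n p, fun s => ∑' n, T n s, ?_, ?_, ?_, ?_⟩
  · intro p hp
    have : ∀ n, a n p = 0 := fun n => ha0 n p fun hpn => hp (hP n p hpn)
    simp [this]
  · intro p
    have h1 := norm_tsum_le_tsum_norm (hasum p).norm
    refine h1.trans ((Summable.tsum_le_tsum (fun n => habound n p) (hasum p).norm
      summable_weights).trans ?_)
    exact Real.tsum_le_of_sum_range_le (fun n => by positivity) sum_weights_le
  · intro s₀ hs₀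
    set R := ‖s₀‖ + 1
    obtain ⟨C, hC⟩ := hTbound R
    have hopen : IsOpen ({s : ℂ | 0 < s.re} ∩ Metric.ball 0 R) :=
      (isOpen_lt continuous_const Complex.continuous_re).inter Metric.isOpen_ball
    have hd : DifferentiableOn ℂ (fun s => ∑' n, T n s) ({s : ℂ | 0 < s.re} ∩ Metric.ball 0 R) := by
      refine Complex.differentiableOn_tsum_of_summable_norm (hexpsum.mul_left C)
        (fun n => (hTdiff n).differentiableOn) hopen fun n s hs => ?_
      exact hC n s (le_of_lt hs.1) (by simpa using (le_of_lt (mem_ball_zero_iff.1 hs.2)))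
    refine (hd.differentiableAt (hopen.mem_nhds ⟨hs₀, ?_⟩)).differentiableWithinAt
    simp [R]
  · intro s hs
    have hs0 : s ≠ 0 := by rintro rfl; simp at hs; linarith
    obtain ⟨C, hC⟩ := hTbound ‖s‖
    have hTs : Summable fun n => T n s := Summable.of_norm_bounded (hexpsum.mul_left C)
      fun n => hC n s (by linarith) le_rfl
    have hI := hasSum_blocks (integrableOn_laplace hhC hbg hs)
    have hpow : Summable fun p : ℕ => ‖(p : ℂ) ^ (-s)‖ := by
      have := (Complex.summable_one_div_nat_cpow (p := s)).2 hs
      simp_rw [one_div, ← Complex.cpow_neg] at this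
      exact this.norm
    have hprod : Summable (Function.uncurry fun (n p : ℕ) => (a n p : ℂ) * (p : ℂ) ^ (-s)) := by
      refine Summable.of_norm_bounded (summable_weights.mul_of_nonneg hpow
        (fun n => by positivity) (fun n => norm_nonneg _)) ?_
      rintro ⟨n, p⟩
      simp only [Function.uncurry, norm_mul, Complex.norm_real]
      gcongr
      exact habound n p
    have e1 : ∑' p : ℕ, ((∑' n, a n p : ℝ) : ℂ) * (p : ℂ) ^ (-s) =
        ∑' p : ℕ, ∑' n, (a n p : ℂ) * (p : ℂ) ^ (-s) := by
      refine tsum_congr fun p => ?_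
      rw [Complex.ofReal_tsum, tsum_mul_right]
    rw [e1, hprod.tsum_comm, ← hI.tsum_eq, ← hTs.tsum_add hI.summable]
    refine tsum_congr fun n => ?_
    simp only [hT, sub_add_cancel]
    rw [tsum_eq_sum (s := P n) (fun p hp => by rw [ha0 n p hp]; simp)]
    exact Finset.sum_congr rfl fun p hp => by rw [cexp_neg_mul_log (hP n p hp).ne_zero]

/-! ### Signs and Euler products -/

/-- Greedy rounding: real coefficients in `[-1, 1]` on the primes can be replaced by signs so that
the partial sums of the differences stay bounded; the sign at `n` is opposite to the current
partial sum. -/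
lemma greedy_signs (a : ℕ → ℝ) (ha0 : ∀ p, ¬ p.Prime → a p = 0) (ha1 : ∀ p, |a p| ≤ 1) :
    ∃ e : ℕ → ℝ, (∀ p, p.Prime → e p = 1 ∨ e p = -1) ∧ (∀ p, ¬ p.Prime → e p = 0) ∧
      ∀ n, |∑ i ∈ Finset.range n, (e i - a i)| ≤ 2 := by
  classical
  let sgn : ℕ → ℝ → ℝ := fun n x => if n.Prime then (if x ≤ 0 then 1 else -1) else 0
  have hsgn1 : ∀ n x, n.Prime → x ≤ 0 → sgn n x = 1 := fun n x h1 h2 => by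
    simp only [sgn, if_pos h1, if_pos h2]
  have hsgn2 : ∀ n x, n.Prime → 0 < x → sgn n x = -1 := fun n x h1 h2 => by
    simp only [sgn, if_pos h1, if_neg (not_le.2 h2)]
  have hsgn3 : ∀ n x, ¬ n.Prime → sgn n x = 0 := fun n x h1 => by
    simp only [sgn, if_neg h1]
  let S : ℕ → ℝ := fun n => Nat.rec 0 (fun n x => x + (sgn n x - a n)) n
  have hS1 : ∀ n, S (n + 1) = S n + (sgn n (S n) - a n) := fun n => rfl
  have hS : ∀ n, ∑ i ∈ Finset.range n, (sgn i (S i) - a i) = S n := by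
    intro n
    induction n with
    | zero => rfl
    | succ k ih => rw [Finset.sum_range_succ, ih, hS1]
  refine ⟨fun n => sgn n (S n), fun p hp => ?_, fun p hp => ?_, fun n => ?_⟩
  · rcases le_or_gt (S p) 0 with hx | hx
    · exact Or.inl (hsgn1 p _ hp hx)
    · exact Or.inr (hsgn2 p _ hp hx)
  · exact hsgn3 p _ hp
  · rw [hS]
    induction n with
    | zero => simp [S]
    | succ k ih =>
      rw [hS1]
      have h1 := abs_le.1 (ha1 k)
      have h2 := abs_le.1 ih
      by_cases hk : k.Prime
      · rcases le_or_gt (S k) 0 with hx | hx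
        · rw [hsgn1 k _ hk hx]
          rw [abs_le]; constructor <;> linarith
        · rw [hsgn2 k _ hk hx]
          rw [abs_le]; constructor <;> linarith
      · rw [hsgn3 k _ hk, ha0 k hk]
        simpa using ih

lemma norm_cpow_sub_cpow_le (n : ℕ) {s : ℂ} {R σ : ℝ} (hs : ‖s‖ ≤ R) (hσ : σ ≤ s.re) :
    ‖((n + 1 : ℕ) : ℂ) ^ (-s) - ((n + 2 : ℕ) : ℂ) ^ (-s)‖ ≤
      R * Real.exp R * (1 / |(n : ℝ) + 1| ^ (σ + 1)) := by
  have hn1 : (0 : ℝ) < (n : ℝ) + 1 := by positivity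
  have hR : 0 ≤ R := (norm_nonneg _).trans hs
  rw [← cexp_neg_mul_log (by omega), ← cexp_neg_mul_log (by omega)]
  set x := Real.log ((n + 1 : ℕ) : ℝ)
  set y := Real.log ((n + 2 : ℕ) : ℝ)
  have hyx : y - x ≤ 1 / ((n : ℝ) + 1) := by
    have h1 : y - x = Real.log (((n + 2 : ℕ) : ℝ) / ((n + 1 : ℕ) : ℝ)) :=
      (Real.log_div (by positivity) (by positivity)).symm
    rw [h1]
    refine (Real.log_le_sub_one_of_pos (by positivity)).trans (le_of_eq ?_)
    push_cast
    field_simp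
    ring
  have hyx0 : 0 ≤ y - x := by
    have : x ≤ y := Real.log_le_log (by positivity) (by push_cast; linarith)
    linarith
  have e : Complex.exp (-s * x) - Complex.exp (-s * y) =
      - (Complex.exp (-s * x) * (Complex.exp (-s * ((y - x : ℝ) : ℂ)) - 1)) := by
    rw [mul_sub, ← Complex.exp_add, mul_one, neg_sub]
    congr 2
    push_cast
    ring
  rw [e, norm_neg, norm_mul, norm_laplace_kernel]
  have h1 : Real.exp (-s.re * x) ≤ 1 / ((n : ℝ) + 1) ^ σ := by
    rw [one_div, ← Real.rpow_neg hn1.le, Real.rpow_def_of_pos hn1]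
    apply Real.exp_le_exp.2
    have hx0 : 0 ≤ x := Real.log_natCast_nonneg _
    have : Real.log ((n : ℝ) + 1) = x := by simp [x]
    rw [this]
    nlinarith
  have h2 : ‖Complex.exp (-s * ((y - x : ℝ) : ℂ)) - 1‖ ≤ R / ((n : ℝ) + 1) * Real.exp R := by
    have hz : ‖-s * ((y - x : ℝ) : ℂ)‖ ≤ R / ((n : ℝ) + 1) := by
      rw [norm_mul, norm_neg, Complex.norm_real, Real.norm_of_nonneg hyx0, div_eq_mul_one_div]
      gcongr
    have := norm_cexp_sub_sum_le _ 1 hz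
    simp only [Finset.range_one, Finset.sum_singleton, pow_zero, Nat.factorial_zero, Nat.cast_one,
      div_one, pow_one, Nat.factorial_one] at this
    refine this.trans ?_
    gcongr
    exact div_le_self hR (by linarith [(n.cast_nonneg : (0 : ℝ) ≤ n)])
  calc _ ≤ 1 / ((n : ℝ) + 1) ^ σ * (R / ((n : ℝ) + 1) * Real.exp R) := by gcongr
    _ = _ := by
      rw [abs_of_pos hn1, Real.rpow_add_one hn1.ne']
      field_simp

/-- A Dirichlet series with bounded coefficient sums continues to `Re s > 0`, by Abel summation. -/
lemma abel_continuation (b : ℕ → ℝ) (hb0 : b 0 = 0) (hb : ∀ n, |b n| ≤ 2)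
    (hS : ∀ n, |∑ i ∈ Finset.range n, b i| ≤ 2) : ∃ A : ℂ → ℂ,
      DifferentiableOn ℂ A {s | 0 < s.re} ∧
      ∀ s : ℂ, 1 < s.re → ∑' n : ℕ, (b n : ℂ) * (n : ℂ) ^ (-s) = A s := by
  set S : ℕ → ℝ := fun n => ∑ i ∈ Finset.range n, b i with hSdef
  set T : ℕ → ℂ → ℂ := fun n s =>
    (S (n + 2) : ℂ) * (((n + 1 : ℕ) : ℂ) ^ (-s) - ((n + 2 : ℕ) : ℂ) ^ (-s)) with hT
  have hTb : ∀ n (s : ℂ) (R σ : ℝ), ‖s‖ ≤ R → σ ≤ s.re →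
      ‖T n s‖ ≤ 2 * (R * Real.exp R) * (1 / |(n : ℝ) + 1| ^ (σ + 1)) := by
    intro n s R σ h1 h2
    simp only [hT]
    rw [norm_mul, Complex.norm_real, mul_assoc]
    exact mul_le_mul (hS _) (norm_cpow_sub_cpow_le n h1 h2) (norm_nonneg _) (by norm_num)
  refine ⟨fun s => ∑' n, T n s, ?_, ?_⟩
  · intro s₀ hs₀
    simp only [mem_ofPred_eq] at hs₀
    set R := ‖s₀‖ + 1
    have hopen : IsOpen ({s : ℂ | s₀.re / 2 < s.re} ∩ Metric.ball 0 R) :=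
      (isOpen_lt continuous_const Complex.continuous_re).inter Metric.isOpen_ball
    have hsum := ((Real.summable_one_div_nat_add_rpow 1 (s₀.re / 2 + 1)).2
      (by linarith)).mul_left (2 * (R * Real.exp R))
    have hd : DifferentiableOn ℂ (fun s => ∑' n, T n s)
        ({s : ℂ | s₀.re / 2 < s.re} ∩ Metric.ball 0 R) := by
      refine Complex.differentiableOn_tsum_of_summable_norm hsum (fun n => ?_) hopen
        fun n s hs => hTb n s R _ (le_of_lt (mem_ball_zero_iff.1 hs.2)) (le_of_lt hs.1)
      have h1 : ∀ k : ℕ, k ≠ 0 → Differentiable ℂ fun s : ℂ => (k : ℂ) ^ (-s) := by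
        intro k hk
        exact differentiable_neg.const_cpow (Or.inl (by exact_mod_cast hk))
      exact (((h1 _ (by omega)).sub (h1 _ (by omega))).const_mul _).differentiableOn
    refine (hd.differentiableAt (hopen.mem_nhds ⟨?_, ?_⟩)).differentiableWithinAt
    · simp only [mem_ofPred_eq]; linarith
    · simp [R]
  · intro s hs
    have hpow : Summable fun p : ℕ => ‖(p : ℂ) ^ (-s)‖ := by
      have := (Complex.summable_one_div_nat_cpow (p := s)).2 hs
      simp_rw [one_div, ← Complex.cpow_neg] at this
      exact this.norm
    have hsum1 : Summable fun n : ℕ => (b n : ℂ) * (n : ℂ) ^ (-s) := by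
      refine Summable.of_norm_bounded (hpow.mul_left 2) fun n => ?_
      rw [norm_mul, Complex.norm_real]
      gcongr
      exact hb n
    have hsum2 : Summable fun n => T n s := by
      refine Summable.of_norm_bounded
        (((Real.summable_one_div_nat_add_rpow 1 (s.re + 1)).2 (by linarith)).mul_left _)
        fun n => hTb n s ‖s‖ s.re le_rfl le_rfl
    rw [hsum1.tsum_eq_zero_add]
    simp only [hb0, Complex.ofReal_zero, zero_mul, zero_add]
    have hsum1' := (summable_nat_add_iff 1).2 hsum1
    have l1 := hsum1'.hasSum.tendsto_sum_nat
    have l2 := hsum2.hasSum.tendsto_sum_nat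
    have l3 : Tendsto (fun N : ℕ => (S (N + 1) : ℂ) * ((N + 1 : ℕ) : ℂ) ^ (-s)) atTop (nhds 0) := by
      have h0 := hpow.tendsto_atTop_zero.comp (tendsto_add_atTop_nat 1)
      have h0' := h0.const_mul 2
      rw [mul_zero] at h0'
      refine squeeze_zero_norm (fun N => ?_) h0'
      simp only [Function.comp, norm_mul, Complex.norm_real]
      gcongr
      exact hS _
    have hid : ∀ N : ℕ, ∑ i ∈ Finset.range N, ((b (i + 1) : ℝ) : ℂ) * ((i + 1 : ℕ) : ℂ) ^ (-s) =
        ∑ i ∈ Finset.range N, T i s + (S (N + 1) : ℂ) * ((N + 1 : ℕ) : ℂ) ^ (-s) := by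
      intro N
      induction N with
      | zero => simp [hSdef, hb0]
      | succ k ih =>
        rw [Finset.sum_range_succ, Finset.sum_range_succ, ih]
        have : (S (k + 1 + 1) : ℂ) = S (k + 1) + b (k + 1) := by
          simp only [hSdef]
          rw [Finset.sum_range_succ _ (k + 1)]
          push_cast
          ring
        simp only [hT]
        have e : k + 2 = k + 1 + 1 := rfl
        rw [e, this]
        ring
    have l4 := l2.add l3
    rw [add_zero] at l4
    refine tendsto_nhds_unique l1 (l4.congr fun N => ?_)
    rw [← hid N]

/-- The contribution of the higher prime powers to the logarithm of the Euler product is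
holomorphic on `Re s > 1 / 2`. -/
lemma differentiableOn_prime_powers (e : ℕ → ℝ) (he : ∀ p, |e p| ≤ 1)
    (he0 : ∀ p, ¬ p.Prime → e p = 0) :
    DifferentiableOn ℂ (fun s : ℂ => ∑' p : ℕ,
      (-Complex.log (1 - (e p : ℂ) * (p : ℂ) ^ (-s)) - (e p : ℂ) * (p : ℂ) ^ (-s)))
      {s | 1 / 2 < s.re} ∧
    ∀ s : ℂ, 1 / 2 < s.re → Summable fun p : ℕ =>
      (-Complex.log (1 - (e p : ℂ) * (p : ℂ) ^ (-s)) - (e p : ℂ) * (p : ℂ) ^ (-s)) := by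
  have hx : ∀ p : ℕ, ∀ s : ℂ, 1 / 2 < s.re → ‖(e p : ℂ) * (p : ℂ) ^ (-s)‖ ≤ 3 / 4 := by
    intro p s hs
    by_cases hp : p.Prime
    · rw [norm_mul, Complex.norm_real, Complex.norm_natCast_cpow_of_pos hp.pos, Real.norm_eq_abs]
      have h2 : (2 : ℝ) ≤ p := by exact_mod_cast hp.two_le
      have h3 : (p : ℝ) ^ (-s).re ≤ 3 / 4 := by
        calc (p : ℝ) ^ (-s).re ≤ (p : ℝ) ^ (-(1 / 2) : ℝ) :=
              Real.rpow_le_rpow_of_exponent_le (by linarith) (by simp; linarith)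
          _ ≤ (2 : ℝ) ^ (-(1 / 2) : ℝ) :=
              Real.rpow_le_rpow_of_nonpos (by norm_num) h2 (by norm_num)
          _ = (Real.sqrt 2)⁻¹ := by
              rw [Real.rpow_neg (by norm_num), Real.sqrt_eq_rpow]
          _ ≤ 3 / 4 := by
              rw [inv_le_comm₀ (by positivity) (by norm_num)]
              rw [Real.le_sqrt (by norm_num) (by norm_num)]
              norm_num
      have h4 : 0 ≤ (p : ℝ) ^ (-s).re := by positivity
      nlinarith [he p, abs_nonneg (e p)]
    · rw [he0 p hp]; norm_num
  have hbd : ∀ p : ℕ, ∀ s : ℂ, ∀ σ : ℝ, 1 / 2 < σ → σ ≤ s.re →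
      ‖-Complex.log (1 - (e p : ℂ) * (p : ℂ) ^ (-s)) - (e p : ℂ) * (p : ℂ) ^ (-s)‖ ≤
        2 * (p : ℝ) ^ (-(2 * σ)) := by
    intro p s σ hσ hs
    by_cases hp : p.Prime
    · set x := (e p : ℂ) * (p : ℂ) ^ (-s) with hxdef
      have h1 : ‖x‖ ≤ 3 / 4 := hx p s (by linarith)
      have h2 := Complex.norm_log_one_add_sub_self_le (z := -x) (by rw [norm_neg]; linarith)
      have h3 : -Complex.log (1 - x) - x = -(Complex.log (1 + -x) - -x) := by
        rw [← sub_eq_add_neg]; ring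
      rw [h3, norm_neg]
      refine h2.trans ?_
      rw [norm_neg]
      have h4 : (1 - ‖x‖)⁻¹ ≤ 4 := by
        rw [inv_le_comm₀ (by linarith) (by norm_num)]
        linarith
      have h5 : ‖x‖ ^ 2 ≤ (p : ℝ) ^ (-(2 * σ)) := by
        have h6 : ‖x‖ ≤ (p : ℝ) ^ (-σ) := by
          rw [hxdef, norm_mul, Complex.norm_real, Complex.norm_natCast_cpow_of_pos hp.pos,
            Real.norm_eq_abs]
          have h7 : (p : ℝ) ^ (-s).re ≤ (p : ℝ) ^ (-σ) :=
            Real.rpow_le_rpow_of_exponent_le (by exact_mod_cast hp.one_lt.le) (by simp; linarith)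
          have h8 : 0 ≤ (p : ℝ) ^ (-s).re := by positivity
          nlinarith [he p, abs_nonneg (e p)]
        calc ‖x‖ ^ 2 ≤ ((p : ℝ) ^ (-σ)) ^ 2 := by gcongr
          _ = (p : ℝ) ^ (-(2 * σ)) := by
            rw [← Real.rpow_natCast, ← Real.rpow_mul (by positivity)]
            congr 1; push_cast; ring
      have h9 : 0 ≤ (p : ℝ) ^ (-(2 * σ)) := by positivity
      have h10 : 0 ≤ (1 - ‖x‖)⁻¹ := by rw [inv_nonneg]; linarith
      calc ‖x‖ ^ 2 * (1 - ‖x‖)⁻¹ / 2 ≤ (p : ℝ) ^ (-(2 * σ)) * 4 / 2 := by gcongr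
        _ = _ := by ring
    · rw [he0 p hp]
      simp only [Complex.ofReal_zero, zero_mul, sub_zero, Complex.log_one, neg_zero, norm_zero]
      positivity
  have hsum : ∀ σ : ℝ, 1 / 2 < σ → Summable fun p : ℕ => 2 * (p : ℝ) ^ (-(2 * σ)) := fun σ hσ =>
    (Real.summable_nat_rpow.2 (by linarith)).mul_left 2
  constructor
  · intro s₀ hs₀
    simp only [mem_ofPred_eq] at hs₀
    set σ := (s₀.re + 1 / 2) / 2 with hσ
    have hσ1 : 1 / 2 < σ := by linarith
    have hopen : IsOpen {s : ℂ | σ < s.re} := isOpen_lt continuous_const Complex.continuous_re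
    refine ((Complex.differentiableOn_tsum_of_summable_norm (hsum σ hσ1) (fun p => ?_) hopen
      fun p s hs => hbd p s σ hσ1 (le_of_lt hs)).differentiableAt
        (hopen.mem_nhds ?_)).differentiableWithinAt
    · intro s hs
      simp only [mem_ofPred_eq] at hs
      by_cases hp : p.Prime
      · have hd : DifferentiableAt ℂ (fun s : ℂ => (p : ℂ) ^ (-s)) s :=
          (differentiable_neg.const_cpow (Or.inl (by exact_mod_cast hp.ne_zero))) s
        have hd2 := hd.const_mul (e p : ℂ)
        have hsl : 1 - (e p : ℂ) * (p : ℂ) ^ (-s) ∈ slitPlane := by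
          left
          have h1 := hx p s (by linarith)
          have h2 := (Complex.abs_re_le_norm _).trans h1
          have h3 := abs_le.1 h2
          rw [Complex.sub_re, Complex.one_re]
          linarith
        exact (((hd2.const_sub 1).clog hsl).neg.sub hd2).differentiableWithinAt
      · rw [he0 p hp]
        simp only [Complex.ofReal_zero, zero_mul, sub_zero, Complex.log_one, neg_zero]
        exact differentiableWithinAt_const _
    · simp only [mem_ofPred_eq]; linarith
  · intro s hs
    exact Summable.of_norm_bounded (hsum s.re hs) fun p => hbd p s s.re hs le_rfl

/-- The completely multiplicative function with prescribed values at the primes. -/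
noncomputable def chi (e : ℕ → ℝ) : ℕ →*₀ ℂ where
  toFun n := if n = 0 then 0 else n.factorization.prod fun p k => (e p : ℂ) ^ k
  map_zero' := by simp
  map_one' := by simp
  map_mul' m n := by
    by_cases hm : m = 0
    · simp [hm]
    by_cases hn : n = 0
    · simp [hn]
    rw [if_neg hm, if_neg hn, if_neg (mul_ne_zero hm hn), Nat.factorization_mul hm hn]
    exact Finsupp.prod_add_index' (fun _ => pow_zero _) (fun _ _ _ => pow_add _ _ _)

lemma chi_prime (e : ℕ → ℝ) {p : ℕ} (hp : p.Prime) : chi e p = e p := by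
  simp only [chi, MonoidWithZeroHom.coe_mk, ZeroHom.coe_mk, if_neg hp.ne_zero]
  rw [hp.factorization,
    Finsupp.prod_single_index (h := fun p k => (e p : ℂ) ^ k) (pow_zero _), pow_one]

lemma chi_mem (e : ℕ → ℝ) (he : ∀ p, p.Prime → e p = 1 ∨ e p = -1) {n : ℕ} (hn : n ≠ 0) :
    chi e n = 1 ∨ chi e n = -1 := by
  simp only [chi, MonoidWithZeroHom.coe_mk, ZeroHom.coe_mk, if_neg hn]
  refine Finset.prod_induction _ (fun z : ℂ => z = 1 ∨ z = -1) ?_ (Or.inl rfl) ?_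
  · rintro a b (rfl | rfl) (rfl | rfl) <;> simp
  · intro p hp
    show (e p : ℂ) ^ n.factorization p = 1 ∨ (e p : ℂ) ^ n.factorization p = -1
    rcases he p (Nat.prime_of_mem_primeFactors (by simpa using hp)) with h | h
    · left; simp [h]
    · rw [h]
      push_cast
      exact neg_one_pow_eq_or ℂ _

/-- Realization of Laplace transforms: up to a zero-free factor `exp A` holomorphic on
`Re s > 1 / 2`, the exponential of the Laplace transform of `h` is a Helson zeta function with
values `±1`. -/
lemma exists_chi : ∃ η : ℕ → ℝ, (∀ n, 0 < η n) ∧ (∀ n, η n ≤ 1) ∧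
    (∀ δ > 0, Tendsto (fun n : ℕ => Real.exp (-δ * n) / η n) atTop (nhds 0)) ∧
    ∀ h : ℝ → ℝ, Measurable h → (∀ n : ℕ, ∀ u ∈ Ioc (n : ℝ) (n + 1), |h u| ≤ Real.exp u * η n) →
    ∃ (χ : ℕ →*₀ ℂ) (A : ℂ → ℂ), (∀ n, n ≠ 0 → χ n = 1 ∨ χ n = -1) ∧
      DifferentiableOn ℂ A {s | 1 / 2 < s.re} ∧
      ∀ s : ℂ, 1 < s.re → Summable (fun n : ℕ => χ n * (n : ℂ) ^ (-s)) ∧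
        ∑' n : ℕ, χ n * (n : ℂ) ^ (-s) =
        Complex.exp (A s + ∫ u in Ioi (0 : ℝ), (h u : ℂ) * Complex.exp (-s * u)) := by
  obtain ⟨η, h1, h2, h3, h4⟩ := prime_transform
  refine ⟨η, h1, h2, h3, fun h hh hb => ?_⟩
  obtain ⟨a, A₃, ha0, ha1, hA₃, hA₃s⟩ := h4 h hh hb
  obtain ⟨e, he1, he0, heS⟩ := greedy_signs a ha0 ha1
  have heabs : ∀ p, |e p| ≤ 1 := by
    intro p
    by_cases hp : p.Prime
    · rcases he1 p hp with h | h <;> rw [h] <;> norm_num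
    · rw [he0 p hp]; norm_num
  obtain ⟨A₂, hA₂, hA₂s⟩ := abel_continuation (fun p => e p - a p)
    (by simp [he0 0 Nat.not_prime_zero, ha0 0 Nat.not_prime_zero])
    (fun n => (abs_sub _ _).trans (by linarith [heabs n, ha1 n])) heS
  obtain ⟨hA₁, hA₁s⟩ := differentiableOn_prime_powers e heabs he0
  have hsub : {s : ℂ | 1 / 2 < s.re} ⊆ {s : ℂ | 0 < s.re} := fun s hs => by
    simp only [mem_ofPred_eq] at hs ⊢
    linarith
  refine ⟨chi e, _, fun n hn => chi_mem e he1 hn,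
    (hA₁.add (hA₂.mono hsub)).add (hA₃.mono hsub), fun s hs => ?_⟩
  have hs0 : s ≠ 0 := by rintro rfl; simp at hs; linarith
  have hpow : Summable fun p : ℕ => ‖(p : ℂ) ^ (-s)‖ := by
    have := (Complex.summable_one_div_nat_cpow (p := s)).2 hs
    simp_rw [one_div, ← Complex.cpow_neg] at this
    exact this.norm
  have hbs : ∀ b : ℕ → ℝ, (∀ n, |b n| ≤ 2) → Summable fun n : ℕ => (b n : ℂ) * (n : ℂ) ^ (-s) := by
    intro b hb
    refine Summable.of_norm_bounded (hpow.mul_left 2) fun n => ?_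
    rw [norm_mul, Complex.norm_real]
    gcongr
    exact hb n
  let f : ℕ →*₀ ℂ := chi e * riemannZetaSummandHom hs0
  have hf : ∀ n, f n = chi e n * (n : ℂ) ^ (-s) := fun n => rfl
  have hfs : Summable fun n => ‖f n‖ := by
    refine Summable.of_nonneg_of_le (fun _ => norm_nonneg _) (fun n => ?_) hpow
    rw [hf, norm_mul]
    refine mul_le_of_le_one_left (norm_nonneg _) ?_
    by_cases hn : n = 0
    · simp [hn]
    · rcases chi_mem e he1 hn with h | h <;> rw [h] <;> simp
  refine ⟨hfs.of_norm, ?_⟩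
  have hE := EulerProduct.exp_tsum_primes_log_eq_tsum hfs
  simp_rw [hf] at hE
  rw [← hE]
  congr 1
  have hP : ∑' p : Nat.Primes, -Complex.log (1 - chi e p * ((p : ℕ) : ℂ) ^ (-s)) =
      ∑' p : ℕ, -Complex.log (1 - (e p : ℂ) * (p : ℂ) ^ (-s)) := by
    have h5 : ∀ p : Nat.Primes, -Complex.log (1 - chi e p * ((p : ℕ) : ℂ) ^ (-s)) =
        (fun p : ℕ => -Complex.log (1 - (e p : ℂ) * (p : ℂ) ^ (-s))) p := fun p => by
      rw [chi_prime e p.2]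
    rw [tsum_congr h5]
    refine (tsum_subtype {p : ℕ | p.Prime}
      fun p : ℕ => -Complex.log (1 - (e p : ℂ) * (p : ℂ) ^ (-s))).trans (tsum_congr fun p => ?_)
    by_cases hp : p ∈ {p : ℕ | p.Prime}
    · rw [indicator_of_mem hp]
    · rw [indicator_of_notMem hp, he0 p hp]
      simp
  rw [hP]
  have hse := hbs e fun n => (heabs n).trans (by norm_num)
  have hsa := hbs a fun n => (ha1 n).trans (by norm_num)
  have hsd := hbs (fun n => e n - a n) fun n => (abs_sub _ _).trans (by linarith [heabs n, ha1 n])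
  have e1 : ∑' p : ℕ, -Complex.log (1 - (e p : ℂ) * (p : ℂ) ^ (-s)) =
      ∑' p : ℕ, (-Complex.log (1 - (e p : ℂ) * (p : ℂ) ^ (-s)) - (e p : ℂ) * (p : ℂ) ^ (-s)) +
        ∑' p : ℕ, (e p : ℂ) * (p : ℂ) ^ (-s) := by
    rw [← (hA₁s s (by linarith)).tsum_add hse]
    simp
  have e2 : ∑' p : ℕ, (e p : ℂ) * (p : ℂ) ^ (-s) =
      ∑' p : ℕ, ((e p - a p : ℝ) : ℂ) * (p : ℂ) ^ (-s) + ∑' p : ℕ, (a p : ℂ) * (p : ℂ) ^ (-s) := by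
    rw [← hsd.tsum_add hsa]
    refine tsum_congr fun p => ?_
    push_cast
    ring
  rw [e1, e2, hA₂s s hs, hA₃s s hs]
  simp only [Pi.add_apply]
  ring

/-! ### Kernels of the Weierstrass factors -/

/-- The tail `∑_{i ≥ K} u ^ i / (i + 1)!` of the power series of `(exp u - 1) / u`, in closed
form; the Laplace transform of `exp ((ρ - 1) u)` times this kernel is minus the logarithm of a
Weierstrass factor with zero `ρ`. -/
noncomputable def tailKernel (K : ℕ) (u : ℝ) : ℝ :=
  (Real.exp u - ∑ m ∈ Finset.range (K + 1), u ^ m / m.factorial) / u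

lemma measurable_tailKernel (K : ℕ) : Measurable (tailKernel K) := by
  unfold tailKernel
  have h : Continuous fun u : ℝ => ∑ m ∈ Finset.range (K + 1), u ^ m / (m.factorial : ℝ) :=
    continuous_finsetSum _ fun m _ => (continuous_pow m).div_const _
  exact (Real.measurable_exp.sub h.measurable).div measurable_id

lemma hasSum_tailKernel (K : ℕ) {u : ℝ} (hu : 0 < u) :
    HasSum (fun i : ℕ => u ^ (i + K) / (i + K + 1).factorial) (tailKernel K u) := by
  have h1 : HasSum (fun n : ℕ => u ^ n / n.factorial) (Real.exp u) := by
    rw [Real.exp_eq_exp_ℝ]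
    exact NormedSpace.expSeries_div_hasSum_exp u
  have h2 := ((hasSum_nat_add_iff' (K + 1)).2 h1).div_const u
  refine h2.congr_fun fun i => ?_
  rw [← add_assoc, pow_succ]
  field_simp

lemma tailKernel_nonneg (K : ℕ) {u : ℝ} (hu : 0 < u) : 0 ≤ tailKernel K u :=
  (hasSum_tailKernel K hu).nonneg fun i => by positivity

lemma tailKernel_le (K : ℕ) {u : ℝ} (hu : 0 < u) :
    tailKernel K u ≤ u ^ K / K.factorial * Real.exp u := by
  rw [tailKernel, div_le_iff₀ hu]
  refine (exp_sub_sum_le hu.le (K + 1)).trans ?_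
  have : (K.factorial : ℝ) ≤ (K + 1).factorial := by
    exact_mod_cast Nat.factorial_le (Nat.le_succ K)
  calc u ^ (K + 1) / ((K + 1).factorial : ℝ) * Real.exp u
      ≤ u ^ (K + 1) / (K.factorial : ℝ) * Real.exp u := by gcongr
    _ = _ := by rw [pow_succ]; ring

lemma tailKernel_le_exp (K : ℕ) {u : ℝ} (hu : 0 < u) : tailKernel K u ≤ Real.exp u := by
  rw [tailKernel, div_le_iff₀ hu]
  have h1 := exp_sub_sum_le hu.le 1
  have h2 : (1 : ℝ) ≤ ∑ m ∈ Finset.range (K + 1), u ^ m / (m.factorial : ℝ) := by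
    have := Finset.single_le_sum (f := fun m : ℕ => u ^ m / (m.factorial : ℝ))
      (fun m _ => by positivity) (Finset.mem_range.2 (Nat.succ_pos K))
    simpa using this
  simp only [Finset.range_one, Finset.sum_singleton, pow_zero, Nat.factorial_zero, Nat.cast_one,
    div_one, pow_one, Nat.factorial_one] at h1
  linarith

lemma integral_pow_mul_exp_neg (n : ℕ) {b : ℝ} (hb : 0 < b) :
    MeasureTheory.IntegrableOn (fun u : ℝ => u ^ n * Real.exp (-b * u)) (Ioi 0) ∧
      ∫ u in Ioi (0 : ℝ), u ^ n * Real.exp (-b * u) = n.factorial / b ^ (n + 1) := by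
  have h := Real.integral_rpow_mul_exp_neg_mul_Ioi (a := n + 1) (r := b) (by positivity) hb
  have e : ∀ u : ℝ, u ^ ((n : ℝ) + 1 - 1) * Real.exp (-(b * u)) = u ^ n * Real.exp (-b * u) := by
    intro u
    rw [add_sub_cancel_right, Real.rpow_natCast, neg_mul]
  simp_rw [e] at h
  have h' : ∫ u in Ioi (0 : ℝ), u ^ n * Real.exp (-b * u) = n.factorial / b ^ (n + 1) := by
    rw [h, Real.Gamma_nat_eq_factorial]
    have : (n : ℝ) + 1 = ((n + 1 : ℕ) : ℝ) := by push_cast; rfl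
    rw [this, Real.rpow_natCast, one_div, inv_pow]
    ring
  refine ⟨?_, h'⟩
  by_contra hc
  rw [MeasureTheory.integral_undef hc] at h'
  have : (0 : ℝ) < n.factorial / b ^ (n + 1) := by positivity
  linarith

lemma norm_pow_mul_cexp (n : ℕ) (W : ℂ) {u : ℝ} (hu : 0 ≤ u) :
    ‖(u : ℂ) ^ n * Complex.exp (-W * u)‖ = u ^ n * Real.exp (-W.re * u) := by
  rw [norm_mul, norm_pow, Complex.norm_real, Real.norm_of_nonneg hu, norm_laplace_kernel]

lemma integrableOn_pow_mul_cexp (n : ℕ) {W : ℂ} (hW : 0 < W.re) :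
    MeasureTheory.IntegrableOn (fun u : ℝ => (u : ℂ) ^ n * Complex.exp (-W * u)) (Ioi 0) := by
  refine MeasureTheory.Integrable.mono' (integral_pow_mul_exp_neg n hW).1 ?_ ?_
  · have : Continuous fun u : ℝ => (u : ℂ) ^ n * Complex.exp (-W * u) := by fun_prop
    exact this.aestronglyMeasurable
  · refine (MeasureTheory.ae_restrict_iff' measurableSet_Ioi).2 (.of_forall fun u hu => ?_)
    exact (norm_pow_mul_cexp n W (le_of_lt hu)).le

lemma integral_pow_mul_cexp (n : ℕ) {W : ℂ} (hW : 0 < W.re) :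
    ∫ u in Ioi (0 : ℝ), (u : ℂ) ^ n * Complex.exp (-W * u) = n.factorial / W ^ (n + 1) := by
  have hW0 : W ≠ 0 := by rintro rfl; simp at hW
  have hder : ∀ u : ℝ, HasDerivAt (fun u : ℝ => Complex.exp (-W * u))
      (-W * Complex.exp (-W * u)) u := by
    intro u
    have h1 : HasDerivAt (fun u : ℝ => -W * (u : ℂ)) (-W) u := by
      simpa using (Complex.ofRealCLM.hasDerivAt (x := u)).const_mul (-W)
    simpa [mul_comm] using h1.cexp
  have hlim : ∀ n : ℕ, Tendsto (fun u : ℝ => (u : ℂ) ^ n * Complex.exp (-W * u)) atTop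
      (nhds 0) := by
    intro n
    rw [tendsto_zero_iff_norm_tendsto_zero]
    have h1 := (isLittleO_pow_exp_pos_mul_atTop n hW).tendsto_div_nhds_zero
    refine h1.congr' ?_
    filter_upwards [eventually_ge_atTop 0] with u hu
    rw [norm_pow_mul_cexp n W hu, neg_mul, Real.exp_neg, div_eq_mul_inv]
  induction n with
  | zero =>
    have h := MeasureTheory.integral_Ioi_of_hasDerivAt_of_tendsto' (a := 0)
      (f := fun u : ℝ => Complex.exp (-W * u)) (f' := fun u : ℝ => -W * Complex.exp (-W * u))
      (m := 0) (fun u _ => hder u)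
      (by simpa [MeasureTheory.IntegrableOn] using (integrableOn_pow_mul_cexp 0 hW).const_mul (-W))
      (by simpa using hlim 0)
    rw [MeasureTheory.integral_const_mul] at h
    simp only [Complex.ofReal_zero, mul_zero, Complex.exp_zero, zero_sub, neg_mul, neg_inj] at h
    simp only [pow_zero, one_mul, Nat.factorial_zero, Nat.cast_one, zero_add, pow_one, neg_mul]
    field_simp
    exact h
  | succ n ih =>
    have hd : ∀ u : ℝ, HasDerivAt (fun u : ℝ => (u : ℂ) ^ (n + 1) * Complex.exp (-W * u))
        ((n + 1 : ℂ) * ((u : ℂ) ^ n * Complex.exp (-W * u)) +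
          (-W) * ((u : ℂ) ^ (n + 1) * Complex.exp (-W * u))) u := by
      intro u
      have h1 : HasDerivAt (fun u : ℝ => (u : ℂ) ^ (n + 1)) ((n + 1 : ℂ) * (u : ℂ) ^ n) u := by
        simpa using (Complex.ofRealCLM.hasDerivAt (x := u)).fun_pow (n + 1)
      refine (h1.mul (hder u)).congr_deriv ?_
      ring
    have i1 := (integrableOn_pow_mul_cexp n hW).const_mul (n + 1 : ℂ)
    have i2 := (integrableOn_pow_mul_cexp (n + 1) hW).const_mul (-W)
    have h := MeasureTheory.integral_Ioi_of_hasDerivAt_of_tendsto' (a := 0)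
      (m := 0) (fun u _ => hd u) (i1.add i2) (hlim (n + 1))
    rw [MeasureTheory.integral_add i1 i2, MeasureTheory.integral_const_mul,
      MeasureTheory.integral_const_mul, ih] at h
    simp only [Complex.ofReal_zero, ne_eq, Nat.add_eq_zero_iff, one_ne_zero, and_false,
      not_false_eq_true, zero_pow, zero_mul, sub_zero] at h
    rw [Nat.factorial_succ]
    push_cast
    generalize (∫ u in Ioi (0 : ℝ), (u : ℂ) ^ (n + 1) * Complex.exp (-W * u)) = X at h ⊢
    field_simp at h ⊢
    linear_combination -h

/-- The logarithm of the Weierstrass elementary factor of genus `K` at a point of the unit disc.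
The term of index `0` vanishes since its denominator does. -/
noncomputable def logFactor (K : ℕ) (z : ℂ) : ℂ :=
  Complex.log (1 - z) + ∑ j ∈ Finset.range (K + 1), z ^ j / j

lemma hasSum_logFactor (K : ℕ) {z : ℂ} (hz : ‖z‖ < 1) :
    HasSum (fun i : ℕ => -(z ^ (i + (K + 1)) / ((i + (K + 1) : ℕ) : ℂ))) (logFactor K z) := by
  have h := ((hasSum_nat_add_iff' (K + 1)).2 (Complex.hasSum_taylorSeries_neg_log hz)).neg
  have e : -(-Complex.log (1 - z) - ∑ j ∈ Finset.range (K + 1), z ^ j / (j : ℂ)) =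
      logFactor K z := by
    rw [logFactor]
    ring
  rwa [e] at h

lemma norm_logFactor_le (K : ℕ) {z : ℂ} (hz : ‖z‖ < 1) :
    ‖logFactor K z‖ ≤ ‖z‖ ^ (K + 1) * (1 - ‖z‖)⁻¹ := by
  have h := hasSum_logFactor K hz
  rw [← h.tsum_eq]
  refine tsum_of_norm_bounded ((hasSum_geometric_of_lt_one (norm_nonneg z) hz).mul_left
    (‖z‖ ^ (K + 1))) fun i => ?_
  rw [norm_neg, norm_div, norm_pow, Complex.norm_natCast, ← pow_add, add_comm i]
  refine div_le_self (by positivity) ?_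
  exact_mod_cast (by omega : 1 ≤ K + 1 + i)

lemma exp_logFactor (K : ℕ) {z : ℂ} (hz : z ≠ 1) : Complex.exp (logFactor K z) =
    (1 - z) * Complex.exp (∑ j ∈ Finset.range (K + 1), z ^ j / (j : ℂ)) := by
  rw [logFactor, Complex.exp_add, Complex.exp_log (sub_ne_zero.2 hz.symm)]

lemma integral_tailKernel (K : ℕ) {W : ℂ} (hW : 1 < W.re) :
    ∫ u in Ioi (0 : ℝ), -(tailKernel K u : ℂ) * Complex.exp (-W * u) = logFactor K W⁻¹ := by
  have hW0 : 0 < W.re := by linarith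
  have hWne : W ≠ 0 := by rintro rfl; simp at hW0
  have hWn : ‖W⁻¹‖ < 1 := by
    rw [norm_inv]
    exact inv_lt_one_of_one_lt₀ (hW.trans_le ((le_abs_self _).trans (Complex.abs_re_le_norm W)))
  have hfac : ∀ i : ℕ, ((i + K + 1).factorial : ℝ) = (i + K + 1 : ℕ) * (i + K).factorial := by
    intro i
    rw [Nat.factorial_succ]
    push_cast
    ring
  set f : ℕ → ℝ → ℂ := fun i u =>
    (-1 / ((i + K + 1).factorial : ℂ)) * ((u : ℂ) ^ (i + K) * Complex.exp (-W * u)) with hf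
  have hintg : ∀ i, MeasureTheory.Integrable (f i) (MeasureTheory.volume.restrict (Ioi 0)) :=
    fun i => (integrableOn_pow_mul_cexp (i + K) hW0).const_mul _
  have hnorm : ∀ i, ∫ u in Ioi (0 : ℝ), ‖f i u‖ = (W.re⁻¹) ^ (i + K + 1) / (i + K + 1 : ℕ) := by
    intro i
    have : ∀ u ∈ Ioi (0 : ℝ), ‖f i u‖ =
        (1 / ((i + K + 1).factorial : ℝ)) * (u ^ (i + K) * Real.exp (-W.re * u)) := by
      intro u hu
      simp only [hf]
      rw [norm_mul, norm_pow_mul_cexp _ _ (le_of_lt hu), norm_div, norm_neg, norm_one,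
        Complex.norm_natCast]
    rw [MeasureTheory.setIntegral_congr_fun measurableSet_Ioi this,
      MeasureTheory.integral_const_mul, (integral_pow_mul_exp_neg _ hW0).2, hfac, inv_pow]
    field_simp
  have hgeo : Summable fun i : ℕ => ∫ u in Ioi (0 : ℝ), ‖f i u‖ := by
    simp_rw [hnorm]
    have h1 : Summable fun i : ℕ => (W.re⁻¹) ^ (i + (K + 1)) :=
      (summable_nat_add_iff (K + 1)).2
        (summable_geometric_of_lt_one (by positivity) (inv_lt_one_of_one_lt₀ hW))
    refine h1.of_nonneg_of_le (fun i => by positivity) fun i => ?_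
    rw [← add_assoc]
    refine div_le_self (by positivity) ?_
    exact_mod_cast (by omega : 1 ≤ i + K + 1)
  have h1 := MeasureTheory.hasSum_integral_of_summable_integral_norm hintg hgeo
  have h2 : ∀ i, ∫ u in Ioi (0 : ℝ), f i u =
      -((W⁻¹) ^ (i + (K + 1)) / ((i + (K + 1) : ℕ) : ℂ)) := by
    intro i
    simp only [hf]
    rw [MeasureTheory.integral_const_mul, integral_pow_mul_cexp _ hW0]
    have h3 : ((i + K + 1).factorial : ℂ) = (i + K + 1 : ℕ) * (i + K).factorial := by
      exact_mod_cast hfac i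
    have h4 : ((i + K).factorial : ℂ) ≠ 0 := by exact_mod_cast (i + K).factorial_ne_zero
    have h5 : ((i + K + 1 : ℕ) : ℂ) ≠ 0 := by exact_mod_cast (i + K).succ_ne_zero
    rw [h3, ← add_assoc, inv_pow]
    field_simp
  simp_rw [h2] at h1
  rw [(hasSum_logFactor K hWn).unique h1]
  refine MeasureTheory.setIntegral_congr_fun measurableSet_Ioi fun u hu => ?_
  have h6 := ((Complex.hasSum_ofReal.2 (hasSum_tailKernel K hu)).neg.mul_right
    (Complex.exp (-W * u))).tsum_eq
  show _ = ∑' i, f i u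
  rw [← h6]
  refine tsum_congr fun i => ?_
  simp only [hf]
  push_cast
  ring

/-- A high genus makes the kernel attached to a zero negligible against any weight `η` of
subexponential decay: large `u` are controlled by the decay `exp (-δ u)`, bounded `u` by the
smallness of the tail of the exponential series. -/
lemma eventually_kernel_le {η : ℕ → ℝ} (hη0 : ∀ n, 0 < η n)
    (hη : ∀ δ > 0, Tendsto (fun n : ℕ => Real.exp (-δ * n) / η n) atTop (nhds 0))
    {δ : ℝ} (hδ : 0 < δ) {c : ℝ} (hc : 0 < c) : ∀ᶠ K : ℕ in atTop,
      ∀ n : ℕ, ∀ u ∈ Ioc (n : ℝ) (n + 1),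
        Real.exp (-δ * u) * tailKernel K u ≤ c * (Real.exp u * η n) := by
  obtain ⟨N, hN⟩ := eventually_atTop.1 ((hη δ hδ).eventually_le_const hc)
  obtain ⟨m, hm0, hm⟩ : ∃ m > 0, ∀ n < N, m ≤ η n := by
    rcases (Finset.range N).eq_empty_or_nonempty with h | h
    · refine ⟨1, one_pos, fun n hn => ?_⟩
      exact absurd (Finset.mem_range.2 hn) (by simp [h])
    · obtain ⟨k, -, hk⟩ := Finset.exists_min_image (Finset.range N) η h
      exact ⟨η k, hη0 k, fun n hn => hk n (Finset.mem_range.2 hn)⟩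
  filter_upwards [(FloorSemiring.tendsto_pow_div_factorial_atTop (N : ℝ)).eventually_le_const
    (mul_pos hc hm0)] with K hK n u hu
  have hu0 : 0 < u := n.cast_nonneg.trans_lt hu.1
  rcases le_or_gt N n with hn | hn
  · have h1 := hN n hn
    rw [div_le_iff₀ (hη0 n)] at h1
    have h2 : Real.exp (-δ * u) ≤ Real.exp (-δ * n) := by
      apply Real.exp_le_exp.2
      nlinarith [hu.1]
    calc Real.exp (-δ * u) * tailKernel K u ≤ (c * η n) * Real.exp u :=
          mul_le_mul (h2.trans h1) (tailKernel_le_exp K hu0) (tailKernel_nonneg K hu0)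
            (mul_nonneg hc.le (hη0 n).le)
      _ = _ := by ring
  · have h1 : u ≤ N := hu.2.trans (by exact_mod_cast hn)
    have h2 : Real.exp (-δ * u) ≤ 1 := Real.exp_le_one_iff.2 (by nlinarith)
    calc Real.exp (-δ * u) * tailKernel K u ≤ 1 * tailKernel K u :=
          mul_le_mul_of_nonneg_right h2 (tailKernel_nonneg K hu0)
      _ ≤ (N : ℝ) ^ K / K.factorial * Real.exp u := by
          rw [one_mul]
          refine (tailKernel_le K hu0).trans ?_
          gcongr
      _ ≤ c * m * Real.exp u := by gcongr
      _ ≤ c * η n * Real.exp u := by gcongr; exact hm n hn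
      _ = _ := by ring

/-! ### The total kernel -/

/-- For prescribed orders `d` on a countable set symmetric about the real axis, genera `K` can be
chosen so that the logarithms of the Weierstrass factors add up, on `Re s > 1`, to the Laplace
transform of a real function `h` that is small relative to `exp u`. The enumeration `e` and the
second condition on `K` record the convergence of the product further left. -/
lemma exists_kernel {S : Set ℂ} (hS : S.Countable) (hre : ∀ ρ ∈ S, ρ.re < 1) (d : ℂ → ℤ)
    (hsymm : ∀ ρ ∈ S, (starRingEnd ℂ) ρ ∈ S) (hd : ∀ ρ ∈ S, d ((starRingEnd ℂ) ρ) = d ρ)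
    {η : ℕ → ℝ} (hη0 : ∀ n, 0 < η n) (hη1 : ∀ n, η n ≤ 1)
    (hη : ∀ δ > 0, Tendsto (fun n : ℕ => Real.exp (-δ * n) / η n) atTop (nhds 0)) :
    ∃ (K e : S → ℕ) (h : ℝ → ℝ), Function.Injective e ∧
      (∀ ρ : S, |(d ρ : ℝ)| * (1 - 1 / ((e ρ : ℝ) + 2)) ^ (K ρ + 1) ≤ (1 / 2) ^ e ρ) ∧
      Measurable h ∧ (∀ n : ℕ, ∀ u ∈ Ioc (n : ℝ) (n + 1), |h u| ≤ Real.exp u * η n) ∧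
      ∀ s : ℂ, 1 < s.re → HasSum (fun ρ : S => (d ρ : ℂ) * logFactor (K ρ) (s - ρ + 1)⁻¹)
        (∫ u in Ioi (0 : ℝ), (h u : ℂ) * Complex.exp (-s * u)) := by
  have : Countable S := hS.to_subtype
  obtain ⟨e, he⟩ := exists_injective_nat S
  have hK : ∀ ρ : S, ∃ K₀ : ℕ, ∀ K ≥ K₀,
      |(d ρ : ℝ)| * (1 - 1 / ((e ρ : ℝ) + 2)) ^ (K + 1) ≤ (1 / 2) ^ e ρ ∧
      ∀ n : ℕ, ∀ u ∈ Ioc (n : ℝ) (n + 1),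
        |(d ρ : ℝ)| * (Real.exp (-(1 - (ρ : ℂ).re) * u) * tailKernel K u) ≤
          1 / 2 * (1 / 2) ^ e ρ * (Real.exp u * η n) := by
    intro ρ
    apply eventually_atTop.1
    refine Eventually.and ?_ ?_
    · have h0 : 1 / ((e ρ : ℝ) + 2) ≤ 1 := by
        rw [div_le_one (by positivity)]
        linarith [((e ρ).cast_nonneg : (0 : ℝ) ≤ e ρ)]
      have h1 : 0 < 1 / ((e ρ : ℝ) + 2) := by positivity
      have h2 := ((tendsto_pow_atTop_nhds_zero_of_lt_one (r := 1 - 1 / ((e ρ : ℝ) + 2))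
        (by linarith) (by linarith)).comp (tendsto_add_atTop_nat 1)).const_mul |(d ρ : ℝ)|
      rw [mul_zero] at h2
      exact h2.eventually_le_const (by positivity)
    · have hc : 0 < 1 / 2 * (1 / 2 : ℝ) ^ e ρ / (|(d ρ : ℝ)| + 1) := by positivity
      have hδ : 0 < 1 - (ρ : ℂ).re := by linarith [hre ρ ρ.2]
      filter_upwards [eventually_kernel_le hη0 hη hδ hc] with K hK n u hu
      have hx : 0 ≤ Real.exp u * η n := by have := hη0 n; positivity
      calc _ ≤ |(d ρ : ℝ)| * (1 / 2 * (1 / 2 : ℝ) ^ e ρ / (|(d ρ : ℝ)| + 1) *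
            (Real.exp u * η n)) :=
            mul_le_mul_of_nonneg_left (hK n u hu) (abs_nonneg _)
        _ = (|(d ρ : ℝ)| / (|(d ρ : ℝ)| + 1)) *
            (1 / 2 * (1 / 2 : ℝ) ^ e ρ * (Real.exp u * η n)) := by ring
        _ ≤ 1 * (1 / 2 * (1 / 2 : ℝ) ^ e ρ * (Real.exp u * η n)) := by
            refine mul_le_mul_of_nonneg_right ?_ (by positivity)
            rw [div_le_one (by positivity)]
            linarith
        _ = _ := one_mul _
  choose K₀ hK₀ using hK
  -- complex conjugation as a permutation of `S`
  let τ : S ≃ S :=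
    { toFun := fun ρ => ⟨(starRingEnd ℂ) ρ, hsymm ρ ρ.2⟩
      invFun := fun ρ => ⟨(starRingEnd ℂ) ρ, hsymm ρ ρ.2⟩
      left_inv := fun ρ => Subtype.ext (Complex.conj_conj _)
      right_inv := fun ρ => Subtype.ext (Complex.conj_conj _) }
  have hττ : ∀ ρ, τ (τ ρ) = ρ := fun ρ => Subtype.ext (Complex.conj_conj _)
  have hτ : ∀ ρ, ((τ ρ : S) : ℂ) = (starRingEnd ℂ) (ρ : ℂ) := fun _ => rfl
  set K : S → ℕ := fun ρ => max (K₀ ρ) (K₀ (τ ρ)) with hKdef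
  have hKτ : ∀ ρ, K (τ ρ) = K ρ := fun ρ => by simp only [hKdef, hττ, max_comm]
  have hK := fun ρ => hK₀ ρ (K ρ) (le_max_left _ _)
  set f : S → ℝ → ℂ := fun ρ u =>
    (d ρ : ℂ) * (-(tailKernel (K ρ) u : ℂ) * Complex.exp (((ρ : ℂ) - 1) * u)) with hf
  have hfm : ∀ ρ, Measurable (f ρ) := by
    intro ρ
    have h1 : Measurable fun u : ℝ => (tailKernel (K ρ) u : ℂ) :=
      Complex.measurable_ofReal.comp (measurable_tailKernel _)
    have h2 : Measurable fun u : ℝ => Complex.exp (((ρ : ℂ) - 1) * u) :=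
      (by fun_prop : Continuous fun u : ℝ => Complex.exp (((ρ : ℂ) - 1) * u)).measurable
    exact (h1.neg.mul h2).const_mul _
  have hfb : ∀ ρ, ∀ n : ℕ, ∀ u ∈ Ioc (n : ℝ) (n + 1),
      ‖f ρ u‖ ≤ 1 / 2 * (1 / 2) ^ e ρ * (Real.exp u * η n) := by
    intro ρ n u hu
    have hu0 : 0 < u := n.cast_nonneg.trans_lt hu.1
    refine le_trans (le_of_eq ?_) ((hK ρ).2 n u hu)
    simp only [hf]
    rw [norm_mul, norm_mul, norm_neg, Complex.norm_real,
      Real.norm_of_nonneg (tailKernel_nonneg _ hu0), Complex.norm_intCast]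
    have h1 : ((ρ : ℂ) - 1) * u = -(1 - (ρ : ℂ)) * u := by ring
    rw [h1, norm_laplace_kernel, Complex.sub_re, Complex.one_re]
    ring
  have hgeo : Summable fun ρ : S => 1 / 2 * (1 / 2 : ℝ) ^ e ρ :=
    (summable_geometric_two.comp_injective he).mul_left _
  have hgeo1 : ∑' ρ : S, 1 / 2 * (1 / 2 : ℝ) ^ e ρ ≤ 1 := by
    rw [tsum_mul_left]
    have := tsum_comp_le_tsum_of_inj summable_geometric_two (fun n => by positivity) he
    rw [tsum_geometric_two] at this
    simp only [Function.comp_def] at this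
    linarith
  have hfb' : ∀ ρ, ∀ u > 0, ‖f ρ u‖ ≤ 1 / 2 * (1 / 2) ^ e ρ * Real.exp u := by
    intro ρ u hu
    obtain ⟨n, hn⟩ := exists_nat_mem_Ioc hu
    refine (hfb ρ n u hn).trans ?_
    gcongr
    exact mul_le_of_le_one_right (Real.exp_pos u).le (hη1 n)
  set H : ℝ → ℂ := fun u => ∑' ρ, f ρ u with hH
  have hHm : Measurable H := Measurable.tsum hfm
  have hreal : ∀ u, ((H u).re : ℂ) = H u := by
    intro u
    apply Complex.conj_eq_iff_re.1
    simp only [hH]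
    rw [Complex.conj_tsum, ← τ.tsum_eq]
    refine tsum_congr fun ρ => ?_
    simp only [hf, hKτ, hτ]
    rw [hd ρ ρ.2]
    simp [← Complex.exp_conj]
  refine ⟨K, e, fun u => (H u).re, he, fun ρ => (hK ρ).1, Complex.measurable_re.comp hHm, ?_, ?_⟩
  · intro n u hu
    refine (Complex.abs_re_le_norm _).trans ?_
    have h1 : 0 ≤ Real.exp u * η n := by have := hη0 n; positivity
    refine (tsum_of_norm_bounded (hgeo.hasSum.mul_right (Real.exp u * η n))
      fun ρ => hfb ρ n u hu).trans ?_
    exact mul_le_of_le_one_left h1 hgeo1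
  · intro s hs
    have hintg : ∀ ρ, MeasureTheory.Integrable (fun u : ℝ => f ρ u * Complex.exp (-s * u))
        (MeasureTheory.volume.restrict (Ioi 0)) := by
      intro ρ
      refine integrableOn_laplace (hfm ρ) (fun u hu => (hfb' ρ u hu).trans ?_) hs
      refine mul_le_of_le_one_left (Real.exp_pos u).le ?_
      have : (1 / 2 : ℝ) ^ e ρ ≤ 1 := pow_le_one₀ (by norm_num) (by norm_num)
      linarith
    have hexp : MeasureTheory.IntegrableOn (fun u : ℝ => Real.exp u * Real.exp (-s.re * u))
        (Ioi 0) := by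
      have := (integral_pow_mul_exp_neg 0 (b := s.re - 1) (by linarith)).1
      refine this.congr_fun (fun u _ => ?_) measurableSet_Ioi
      simp only [pow_zero, one_mul]
      rw [← Real.exp_add]
      congr 1
      ring
    have hsum : Summable fun ρ => ∫ u in Ioi (0 : ℝ), ‖f ρ u * Complex.exp (-s * u)‖ := by
      refine (hgeo.mul_right (∫ u in Ioi (0 : ℝ),
        Real.exp u * Real.exp (-s.re * u))).of_nonneg_of_le
          (fun ρ => MeasureTheory.integral_nonneg fun _ => norm_nonneg _) fun ρ => ?_
      rw [← MeasureTheory.integral_const_mul]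
      refine MeasureTheory.setIntegral_mono_on (hintg ρ).norm (hexp.const_mul _)
        measurableSet_Ioi fun u hu => ?_
      rw [norm_mul, norm_laplace_kernel, ← mul_assoc]
      exact mul_le_mul_of_nonneg_right (hfb' ρ u hu) (Real.exp_pos _).le
    have h1 := MeasureTheory.hasSum_integral_of_summable_integral_norm hintg hsum
    have h2 : ∫ u in Ioi (0 : ℝ), ∑' ρ, f ρ u * Complex.exp (-s * u) =
        ∫ u in Ioi (0 : ℝ), ((H u).re : ℂ) * Complex.exp (-s * u) := by
      refine MeasureTheory.setIntegral_congr_fun measurableSet_Ioi fun u _ => ?_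
      show ∑' ρ, f ρ u * Complex.exp (-s * u) = ((H u).re : ℂ) * Complex.exp (-s * u)
      rw [hreal, tsum_mul_right]
    rw [h2] at h1
    refine h1.congr_fun fun ρ => ?_
    have hW : 1 < (s - ρ + 1).re := by
      simp only [Complex.add_re, Complex.sub_re, Complex.one_re]
      linarith [hre ρ ρ.2]
    rw [← integral_tailKernel (K ρ) hW, ← MeasureTheory.integral_const_mul]
    refine MeasureTheory.setIntegral_congr_fun measurableSet_Ioi fun u _ => ?_
    simp only [hf]
    rw [mul_assoc, mul_assoc, ← Complex.exp_add]
    congr 4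
    ring

/-! ### The Weierstrass product -/

/-- The `d`-th power of the Weierstrass elementary factor of genus `K` in the variable
`1 / (s - ρ + 1)`, which equals `1` at `s = ρ`: it has order `d` at `ρ`, and for `Re ρ < 1` neither
zeros nor poles elsewhere in `Re s > 0`. -/
noncomputable def factor (K : ℕ) (d : ℤ) (ρ s : ℂ) : ℂ :=
  ((1 - (s - ρ + 1)⁻¹) *
    Complex.exp (∑ j ∈ Finset.range (K + 1), ((s - ρ + 1)⁻¹) ^ j / (j : ℂ))) ^ d

lemma factor_eq_exp (K : ℕ) (d : ℤ) {ρ s : ℂ} (h : ‖(s - ρ + 1)⁻¹‖ < 1) :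
    factor K d ρ s = Complex.exp ((d : ℂ) * logFactor K (s - ρ + 1)⁻¹) := by
  have h1 : (s - ρ + 1)⁻¹ ≠ 1 := fun h1 => by rw [h1, norm_one] at h; exact lt_irrefl _ h
  rw [factor, ← exp_logFactor K h1, Complex.exp_int_mul]

lemma factor_local (K : ℕ) (d : ℤ) {ρ s₀ : ℂ} (hρ : ρ.re < 1) (hs₀ : 0 < s₀.re) :
    ∃ g : ℂ → ℂ, AnalyticAt ℂ g s₀ ∧ g s₀ ≠ 0 ∧
      ∀ᶠ z in nhds s₀, factor K d ρ z = (z - s₀) ^ (if ρ = s₀ then d else 0) * g z := by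
  have hne : ∀ z : ℂ, 0 < z.re → z - ρ + 1 ≠ 0 := by
    intro z hz h0
    have := congrArg Complex.re h0
    simp only [Complex.add_re, Complex.sub_re, Complex.one_re, Complex.zero_re] at this
    linarith
  have hev : ∀ᶠ z : ℂ in nhds s₀, 0 < z.re :=
    (isOpen_lt continuous_const Complex.continuous_re).mem_nhds hs₀
  have ha0 : AnalyticAt ℂ (fun z : ℂ => (z - ρ + 1)⁻¹) s₀ :=
    ((analyticAt_id.sub analyticAt_const).add analyticAt_const).inv (hne s₀ hs₀)
  have ha1 : AnalyticAt ℂ (fun z : ℂ => Complex.exp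
      (∑ j ∈ Finset.range (K + 1), ((z - ρ + 1)⁻¹) ^ j / (j : ℂ))) s₀ := by
    refine AnalyticAt.cexp ?_
    refine Finset.analyticAt_fun_sum _ fun j _ => ?_
    simp_rw [div_eq_mul_inv]
    exact (ha0.pow j).mul analyticAt_const
  have hfac : ∀ z : ℂ, 0 < z.re → factor K d ρ z = (z - ρ) ^ d * ((z - ρ + 1)⁻¹ *
      Complex.exp (∑ j ∈ Finset.range (K + 1), ((z - ρ + 1)⁻¹) ^ j / (j : ℂ))) ^ d := by
    intro z hz
    have h1 : 1 - (z - ρ + 1)⁻¹ = (z - ρ) * (z - ρ + 1)⁻¹ := by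
      have := hne z hz
      field_simp
      ring
    rw [factor, h1, mul_assoc, mul_zpow]
  have hne1 : (s₀ - ρ + 1)⁻¹ * Complex.exp
      (∑ j ∈ Finset.range (K + 1), ((s₀ - ρ + 1)⁻¹) ^ j / (j : ℂ)) ≠ 0 :=
    mul_ne_zero (inv_ne_zero (hne s₀ hs₀)) (Complex.exp_ne_zero _)
  have ha2 := (ha0.mul ha1).zpow (n := d) hne1
  by_cases h : ρ = s₀
  · subst h
    refine ⟨_, ha2, zpow_ne_zero d hne1, ?_⟩
    filter_upwards [hev] with z hz
    rw [if_pos rfl, hfac z hz]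
    rfl
  · have h' : s₀ - ρ ≠ 0 := sub_ne_zero.2 fun h1 => h h1.symm
    have ha3 : AnalyticAt ℂ (fun z : ℂ => z - ρ) s₀ := analyticAt_id.sub analyticAt_const
    refine ⟨_, (ha3.zpow (n := d) h').mul ha2,
      mul_ne_zero (zpow_ne_zero d h') (zpow_ne_zero d hne1), ?_⟩
    filter_upwards [hev] with z hz
    rw [if_neg h, hfac z hz, zpow_zero, one_mul]
    rfl

lemma differentiableAt_logFactor (K : ℕ) {ρ s : ℂ} (h0 : s - ρ + 1 ≠ 0) (h : ‖(s - ρ + 1)⁻¹‖ < 1) :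
    DifferentiableAt ℂ (fun z : ℂ => logFactor K (z - ρ + 1)⁻¹) s := by
  have h1 : DifferentiableAt ℂ (fun z : ℂ => (z - ρ + 1)⁻¹) s :=
    ((differentiableAt_id.sub_const ρ).add_const 1).inv h0
  have hsl : 1 - (s - ρ + 1)⁻¹ ∈ slitPlane := by
    left
    have h2 := (abs_le.1 (Complex.abs_re_le_norm (s - ρ + 1)⁻¹)).2
    rw [Complex.sub_re, Complex.one_re]
    linarith
  unfold logFactor
  refine ((h1.const_sub 1).clog hsl).add (DifferentiableAt.fun_sum fun j _ => ?_)
  exact (h1.pow j).div_const _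

/-- The Weierstrass product has order `d s₀` at every point `s₀` to the right of `σ`. -/
lemma product_local {S : Set ℂ} {σ : ℝ} (hσ : 0 < σ) (hre : ∀ ρ ∈ S, ρ.re < 1) (d : ℂ → ℤ)
    (hd0 : ∀ ρ, ρ ∉ S → d ρ = 0)
    (hfin : ∀ a R : ℝ, σ < a → {ρ ∈ S | a ≤ ρ.re ∧ ‖ρ‖ ≤ R}.Finite)
    (K e : S → ℕ) (he : Function.Injective e)
    (hK : ∀ ρ : S, |(d ρ : ℝ)| * (1 - 1 / ((e ρ : ℝ) + 2)) ^ (K ρ + 1) ≤ (1 / 2) ^ e ρ)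
    {s₀ : ℂ} (hs₀ : σ < s₀.re) :
    ∃ g : ℂ → ℂ, AnalyticAt ℂ g s₀ ∧ g s₀ ≠ 0 ∧
      ∀ᶠ z in nhds s₀, ∏' ρ : S, factor (K ρ) (d ρ) ρ z = (z - s₀) ^ d s₀ * g z := by
  classical
  set r := (s₀.re - σ) / 4 with hr
  have hr0 : 0 < r := by linarith
  obtain ⟨e₀, he₀⟩ := exists_nat_gt (1 / r)
  set R := ‖s₀‖ + 2 + 2 * r with hR
  have hT1 : {ρ : S | σ + 2 * r ≤ (ρ : ℂ).re ∧ ‖(ρ : ℂ)‖ ≤ R}.Finite := by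
    refine Finite.of_finite_image ((hfin (σ + 2 * r) R (by linarith)).subset ?_)
      Subtype.val_injective.injOn
    rintro _ ⟨ρ, hρ, rfl⟩
    exact ⟨ρ.2, hρ⟩
  have hT2 : {ρ : S | e ρ < e₀}.Finite :=
    (finite_Iio e₀).preimage he.injOn
  set T : Finset S := (hT1.union hT2).toFinset with hT
  set q := (1 + r)⁻¹ with hq
  have hq0 : 0 < q := by positivity
  have hq1 : q < 1 := inv_lt_one_of_one_lt₀ (by linarith)
  -- off the finite set `T` the variable of the elementary factor stays in a disc of radius `q < 1`
  have hz : ∀ ρ : S, ρ ∉ T → ∀ s ∈ Metric.ball s₀ r,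
      (s - ρ + 1 ≠ 0) ∧ ‖(s - ρ + 1)⁻¹‖ ≤ q := by
    intro ρ hρ s hs
    have hρ' : ¬ (σ + 2 * r ≤ (ρ : ℂ).re ∧ ‖(ρ : ℂ)‖ ≤ R) := fun h =>
      hρ (by rw [hT, Finite.mem_toFinset]; exact Or.inl h)
    rw [Metric.mem_ball, dist_eq_norm] at hs
    have key : 1 + r ≤ ‖s - ρ + 1‖ := by
      rcases lt_or_ge (ρ : ℂ).re (σ + 2 * r) with h | h
      · refine le_trans ?_ ((le_abs_self _).trans (Complex.abs_re_le_norm _))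
        have h1 := (abs_le.1 ((Complex.abs_re_le_norm (s - s₀)).trans hs.le)).1
        simp only [Complex.add_re, Complex.sub_re, Complex.one_re] at h1 ⊢
        linarith
      · have h1 : R < ‖(ρ : ℂ)‖ := lt_of_not_ge fun h2 => hρ' ⟨h, h2⟩
        have h2 : (ρ : ℂ) = (s - s₀) + s₀ + 1 - (s - ρ + 1) := by ring
        have h3 : ‖(ρ : ℂ)‖ ≤ ‖s - s₀‖ + ‖s₀‖ + 1 + ‖s - ρ + 1‖ := by
          calc ‖(ρ : ℂ)‖ = ‖(s - s₀) + s₀ + 1 - (s - ρ + 1)‖ := by rw [← h2]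
            _ ≤ ‖(s - s₀) + s₀ + 1‖ + ‖s - ρ + 1‖ := norm_sub_le _ _
            _ ≤ ‖(s - s₀) + s₀‖ + ‖(1 : ℂ)‖ + ‖s - ρ + 1‖ := by gcongr; exact norm_add_le _ _
            _ ≤ _ := by rw [norm_one]; gcongr; exact norm_add_le _ _
        linarith
    refine ⟨fun h0 => ?_, ?_⟩
    · rw [h0, norm_zero] at key
      linarith
    · rw [norm_inv]
      exact inv_anti₀ (by linarith) key
  have hbd : ∀ ρ : S, ρ ∉ T → ∀ s ∈ Metric.ball s₀ r,
      ‖(d ρ : ℂ) * logFactor (K ρ) (s - ρ + 1)⁻¹‖ ≤ (1 / 2) ^ e ρ * (1 - q)⁻¹ := by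
    intro ρ hρ s hs
    have hze := (hz ρ hρ s hs).2
    have heρ : e₀ ≤ e ρ := not_lt.1 fun h =>
      hρ (by rw [hT, Finite.mem_toFinset]; exact Or.inr h)
    have hqe : q ≤ 1 - 1 / ((e ρ : ℝ) + 2) := by
      have h1 : (e₀ : ℝ) ≤ e ρ := by exact_mod_cast heρ
      have h4 : 1 + r < ((e ρ : ℝ) + 2) * r := by
        have h5 : 1 / r < e ρ := by linarith
        rw [div_lt_iff₀ hr0] at h5
        linarith
      have h6 : 1 / ((e ρ : ℝ) + 2) ≤ r / (1 + r) := by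
        rw [div_le_div_iff₀ (by positivity) (by positivity)]
        linarith
      have h7 : q = 1 - r / (1 + r) := by
        rw [hq]
        field_simp
        ring
      linarith
    rw [norm_mul, Complex.norm_intCast]
    calc |(d ρ : ℝ)| * ‖logFactor (K ρ) (s - ρ + 1)⁻¹‖
        ≤ |(d ρ : ℝ)| * (‖(s - ρ + 1)⁻¹‖ ^ (K ρ + 1) * (1 - ‖(s - ρ + 1)⁻¹‖)⁻¹) := by
          gcongr
          exact norm_logFactor_le _ (hze.trans_lt hq1)
      _ ≤ |(d ρ : ℝ)| * ((1 - 1 / ((e ρ : ℝ) + 2)) ^ (K ρ + 1) * (1 - q)⁻¹) := by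
          refine mul_le_mul_of_nonneg_left (mul_le_mul ?_ ?_ ?_ ?_) (abs_nonneg _)
          · exact pow_le_pow_left₀ (norm_nonneg _) (hze.trans hqe) _
          · exact inv_anti₀ (by linarith) (by linarith)
          · exact inv_nonneg.2 (by linarith)
          · exact pow_nonneg (hq0.le.trans hqe) _
      _ ≤ _ := by
          rw [← mul_assoc]
          exact mul_le_mul_of_nonneg_right (hK ρ) (inv_nonneg.2 (by linarith))
  set l : S → ℂ → ℂ := fun ρ s =>
    if ρ ∈ T then 0 else (d ρ : ℂ) * logFactor (K ρ) (s - ρ + 1)⁻¹ with hl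
  have hlb : ∀ ρ, ∀ s ∈ Metric.ball s₀ r, ‖l ρ s‖ ≤ (1 / 2) ^ e ρ * (1 - q)⁻¹ := by
    intro ρ s hs
    by_cases h : ρ ∈ T
    · simp only [hl, if_pos h, norm_zero]
      have : 0 ≤ (1 - q)⁻¹ := inv_nonneg.2 (by linarith)
      positivity
    · simp only [hl, if_neg h]
      exact hbd ρ h s hs
  have hgeo : Summable fun ρ : S => (1 / 2 : ℝ) ^ e ρ * (1 - q)⁻¹ :=
    (summable_geometric_two.comp_injective he).mul_right _
  have hLd : DifferentiableOn ℂ (fun s => ∑' ρ, l ρ s) (Metric.ball s₀ r) := by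
    refine Complex.differentiableOn_tsum_of_summable_norm hgeo (fun ρ => ?_) Metric.isOpen_ball hlb
    by_cases h : ρ ∈ T
    · simp only [hl, if_pos h]
      exact differentiableOn_const _
    · simp only [hl, if_neg h]
      intro s hs
      exact ((differentiableAt_logFactor (K ρ) (hz ρ h s hs).1
        ((hz ρ h s hs).2.trans_lt hq1)).const_mul _).differentiableWithinAt
  have hLa : AnalyticAt ℂ (fun s => ∑' ρ, l ρ s) s₀ :=
    hLd.analyticAt (Metric.ball_mem_nhds s₀ hr0)
  have hprod : ∀ s ∈ Metric.ball s₀ r, ∏' ρ : S, factor (K ρ) (d ρ) ρ s =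
      (∏ ρ ∈ T, factor (K ρ) (d ρ) ρ s) * Complex.exp (∑' ρ, l ρ s) := by
    intro s hs
    have h1 : HasSum (fun ρ => l ρ s) (∑' ρ, l ρ s) :=
      (Summable.of_norm_bounded hgeo fun ρ => hlb ρ s hs).hasSum
    have h2 := h1.cexp
    have h3 : HasProd (fun ρ : S => if ρ ∈ T then factor (K ρ) (d ρ) ρ s else 1)
        (∏ ρ ∈ T, if ρ ∈ T then factor (K ρ) (d ρ) ρ s else 1) :=
      hasProd_prod_of_ne_finset_one fun ρ hρ => if_neg hρ
    have h4 : ∏ ρ ∈ T, (if ρ ∈ T then factor (K ρ) (d ρ) ρ s else 1) =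
        ∏ ρ ∈ T, factor (K ρ) (d ρ) ρ s := Finset.prod_congr rfl fun ρ hρ => if_pos hρ
    rw [h4] at h3
    refine HasProd.tprod_eq ((h3.mul h2).congr_fun fun ρ => ?_)
    by_cases h : ρ ∈ T
    · simp [hl, h]
    · simp only [hl, Function.comp, if_neg h, one_mul]
      exact factor_eq_exp _ _ ((hz ρ h s hs).2.trans_lt hq1)
  choose g hga hg0 hge using fun ρ : S =>
    factor_local (K ρ) (d ρ) (ρ := (ρ : ℂ)) (s₀ := s₀) (hre ρ ρ.2) (hσ.trans hs₀)
  refine ⟨fun z => (∏ ρ ∈ T, g ρ z) * Complex.exp (∑' ρ, l ρ z),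
    (Finset.analyticAt_fun_prod _ fun ρ _ => hga ρ).mul hLa.cexp,
    mul_ne_zero (Finset.prod_ne_zero_iff.2 fun ρ _ => hg0 ρ) (Complex.exp_ne_zero _), ?_⟩
  have hall : ∀ᶠ z in nhds s₀, ∀ ρ ∈ T, factor (K ρ) (d ρ) ρ z =
      (z - s₀) ^ (if (ρ : ℂ) = s₀ then d ρ else 0) * g ρ z :=
    (Filter.eventually_all_finset T).2 fun ρ _ => hge ρ
  filter_upwards [hall, Metric.ball_mem_nhds s₀ hr0] with z hz1 hz2
  rw [hprod z hz2, Finset.prod_congr rfl hz1, Finset.prod_mul_distrib, ← mul_assoc]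
  congr 2
  by_cases h : s₀ ∈ S
  · have hmem : (⟨s₀, h⟩ : S) ∈ T := by
      rw [hT, Finite.mem_toFinset]
      left
      refine ⟨?_, ?_⟩
      · show σ + 2 * r ≤ s₀.re
        linarith
      · show ‖s₀‖ ≤ R
        linarith
    rw [Finset.prod_eq_single_of_mem _ hmem]
    · simp
    · intro ρ _ hρ
      have : (ρ : ℂ) ≠ s₀ := fun h1 => hρ (Subtype.ext h1)
      rw [if_neg this, zpow_zero]
  · rw [hd0 s₀ h, zpow_zero]
    refine Finset.prod_eq_one fun ρ _ => ?_
    have : (ρ : ℂ) ≠ s₀ := fun h1 => h (h1 ▸ ρ.2)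
    rw [if_neg this, zpow_zero]

lemma finite_of_no_accPt {S : Set ℂ} {σ : ℝ} (hacc : ∀ z : ℂ, z.re ≠ σ → ¬ AccPt z (𝓟 S))
    (a R : ℝ) (ha : σ < a) : {ρ ∈ S | a ≤ ρ.re ∧ ‖ρ‖ ≤ R}.Finite := by
  by_contra hinf
  have hc : IsCompact ({z : ℂ | a ≤ z.re} ∩ Metric.closedBall 0 R) :=
    (isCompact_closedBall 0 R).inter_left (isClosed_le continuous_const Complex.continuous_re)
  obtain ⟨z, hz, hzacc⟩ := Set.Infinite.exists_accPt_of_subset_isCompact hinf hc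
    (fun ρ hρ => ⟨hρ.2.1, mem_closedBall_zero_iff.2 hρ.2.2⟩)
  have hz1 : a ≤ z.re := hz.1
  exact hacc z (by linarith : z.re ≠ σ) (hzacc.mono (principal_mono.2 fun ρ hρ => hρ.1))

lemma countable_of_no_accPt {S : Set ℂ} {σ : ℝ} (hS : ∀ ρ ∈ S, σ < ρ.re)
    (hacc : ∀ z : ℂ, z.re ≠ σ → ¬ AccPt z (𝓟 S)) : S.Countable := by
  have h : S ⊆ ⋃ n : ℕ, {ρ ∈ S | σ + 1 / ((n : ℝ) + 1) ≤ ρ.re ∧ ‖ρ‖ ≤ n} := by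
    intro ρ hρ
    obtain ⟨n, hn⟩ := exists_nat_one_div_lt (sub_pos.2 (hS ρ hρ))
    obtain ⟨m, hm⟩ := exists_nat_ge ‖ρ‖
    refine mem_iUnion.2 ⟨max n m, hρ, ?_, hm.trans (by exact_mod_cast le_max_right n m)⟩
    have h1 : 1 / (((max n m : ℕ) : ℝ) + 1) ≤ 1 / ((n : ℝ) + 1) := by
      gcongr
      exact le_max_left n m
    linarith
  exact (countable_iUnion fun n => (finite_of_no_accPt hacc _ _
    (by linarith [(by positivity : (0 : ℝ) < 1 / ((n : ℝ) + 1))])).countable).mono h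

end Helson

/-! ### Prescribed zeros and poles -/

theorem helson_zeta_prescribed_zeros_poles_pm_one
    (SZ SP : Set ℂ) (mZ mP : ℂ → ℕ)
    (hZstrip : ∀ s ∈ SZ, 21 / 40 < s.re ∧ s.re < 1)
    (hPstrip : ∀ s ∈ SP, 21 / 40 < s.re ∧ s.re < 1)
    (hmZ : ∀ s ∈ SZ, 1 ≤ mZ s) (hmP : ∀ s ∈ SP, 1 ≤ mP s)
    (hdisj : Disjoint SZ SP)
    (hacc : ∀ z : ℂ, z.re ≠ 21 / 40 → ¬ AccPt z (𝓟 (SZ ∪ SP)))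
    (hZsymm : ∀ s : ℂ, s ∈ SZ ↔ (starRingEnd ℂ) s ∈ SZ)
    (hZsymm' : ∀ s ∈ SZ, mZ ((starRingEnd ℂ) s) = mZ s)
    (hPsymm : ∀ s : ℂ, s ∈ SP ↔ (starRingEnd ℂ) s ∈ SP)
    (hPsymm' : ∀ s ∈ SP, mP ((starRingEnd ℂ) s) = mP s) :
    ∃ (χ : ℕ → ℂ) (F : ℂ → ℂ),
      CompletelyMultiplicative χ ∧
      (∀ n : ℕ, 1 ≤ n → χ n ∈ ({1, -1} : Set ℂ)) ∧
      MeromorphicOn F {s : ℂ | 21 / 40 < s.re} ∧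
      (∀ s : ℂ, 1 < s.re → F s = helsonZeta χ s) ∧
      AnalyticOnNhd ℂ F ({s : ℂ | 21 / 40 < s.re} \ SP) ∧
      (∀ s : ℂ, 21 / 40 < s.re → s ∉ SP → (F s = 0 ↔ s ∈ SZ)) ∧
      (∀ s ∈ SZ, ZeroOfOrder F s (mZ s)) ∧
      (∀ s ∈ SP, PoleOfOrder F s (mP s)) := by
  classical
  obtain ⟨η, hη0, hη1, hη, hchi⟩ := Helson.exists_chi
  set S := SZ ∪ SP with hS
  have hstrip : ∀ ρ ∈ S, 21 / 40 < ρ.re ∧ ρ.re < 1 := by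
    rintro ρ (h | h)
    · exact hZstrip ρ h
    · exact hPstrip ρ h
  -- the prescribed divisor
  set d : ℂ → ℤ := fun ρ =>
    if ρ ∈ SZ then (mZ ρ : ℤ) else if ρ ∈ SP then -(mP ρ : ℤ) else 0 with hd
  have hdZ : ∀ ρ ∈ SZ, d ρ = mZ ρ := fun ρ h => if_pos h
  have hdP : ∀ ρ ∈ SP, d ρ = -(mP ρ : ℤ) := fun ρ h => by
    simp only [hd, if_neg (disjoint_right.1 hdisj h), if_pos h]
  have hd0 : ∀ ρ, ρ ∉ SZ → ρ ∉ SP → d ρ = 0 := fun ρ h1 h2 => by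
    simp only [hd, if_neg h1, if_neg h2]
  have hsymm : ∀ ρ ∈ S, (starRingEnd ℂ) ρ ∈ S := by
    rintro ρ (h | h)
    · exact Or.inl ((hZsymm ρ).1 h)
    · exact Or.inr ((hPsymm ρ).1 h)
  have hdsymm : ∀ ρ ∈ S, d ((starRingEnd ℂ) ρ) = d ρ := by
    rintro ρ (h | h)
    · rw [hdZ ρ h, hdZ _ ((hZsymm ρ).1 h), hZsymm' ρ h]
    · rw [hdP ρ h, hdP _ ((hPsymm ρ).1 h), hPsymm' ρ h]
  obtain ⟨K, e, h, he, hK, hhm, hhb, hsum⟩ := Helson.exists_kernel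
    (Helson.countable_of_no_accPt (fun ρ hρ => (hstrip ρ hρ).1) hacc)
    (fun ρ hρ => (hstrip ρ hρ).2) d hsymm hdsymm hη0 hη1 hη
  obtain ⟨χ, A, hχ, hA, hχA⟩ := hchi h hhm hhb
  set G : ℂ → ℂ := fun s => ∏' ρ : S, Helson.factor (K ρ) (d ρ) ρ s with hG
  set F : ℂ → ℂ := fun s => G s * Complex.exp (A s) with hF
  have hlocal : ∀ s : ℂ, 21 / 40 < s.re → ∃ g : ℂ → ℂ, AnalyticAt ℂ g s ∧ g s ≠ 0 ∧
      ∀ᶠ z in nhds s, F z = (z - s) ^ d s * g z := by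
    intro s hs
    obtain ⟨g, hga, hg0, hge⟩ := Helson.product_local (σ := 21 / 40) (by norm_num)
      (fun ρ hρ => (hstrip ρ hρ).2) d
      (fun ρ hρ => hd0 ρ (fun h => hρ (Or.inl h)) (fun h => hρ (Or.inr h)))
      (Helson.finite_of_no_accPt hacc) K e he hK hs
    have hAa : AnalyticAt ℂ A s := hA.analyticAt
      ((isOpen_lt continuous_const Complex.continuous_re).mem_nhds
        (by simp only [mem_ofPred_eq]; linarith))
    refine ⟨fun z => g z * Complex.exp (A z), hga.mul hAa.cexp,
      mul_ne_zero hg0 (Complex.exp_ne_zero _), ?_⟩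
    filter_upwards [hge] with z hz
    simp only [hF, hG]
    rw [hz, mul_assoc]
  refine ⟨χ, F, ⟨map_one χ, map_mul χ⟩, ?_, ?_, ?_, ?_, ?_, ?_, ?_⟩
  · intro n hn
    exact hχ n (by omega)
  · intro s hs
    obtain ⟨g, hga, -, hge⟩ := hlocal s hs
    have hm : MeromorphicAt (fun z => (z - s) ^ d s * g z) s :=
      (((MeromorphicAt.id s).sub (MeromorphicAt.const s s)).zpow (d s)).mul hga.meromorphicAt
    exact hm.congr ((hge.mono fun z hz => hz.symm).filter_mono nhdsWithin_le_nhds)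
  · intro s hs
    obtain ⟨hs1, hs2⟩ := hχA s hs
    have h1 := (hsum s hs).cexp
    have h2 : G s = Complex.exp (∫ u in Ioi (0 : ℝ), (h u : ℂ) * Complex.exp (-s * u)) := by
      refine HasProd.tprod_eq (h1.congr_fun fun ρ => ?_)
      refine Helson.factor_eq_exp _ _ ?_
      have hre : 1 < (s - ρ + 1).re := by
        simp only [Complex.add_re, Complex.sub_re, Complex.one_re]
        linarith [(hstrip ρ ρ.2).2]
      rw [norm_inv]
      exact inv_lt_one_of_one_lt₀ (hre.trans_le ((le_abs_self _).trans (Complex.abs_re_le_norm _)))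
    simp only [hF]
    rw [h2, mul_comm, ← Complex.exp_add, ← hs2, hs1.tsum_eq_zero_add, map_zero, zero_mul, zero_add,
      helsonZeta]
    refine tsum_congr fun n => ?_
    push_cast
    rfl
  · rintro s ⟨hs, hsP⟩
    obtain ⟨g, hga, -, hge⟩ := hlocal s hs
    obtain ⟨k, hk⟩ : ∃ k : ℕ, d s = k := by
      by_cases h : s ∈ SZ
      · exact ⟨_, hdZ s h⟩
      · exact ⟨0, hd0 s h hsP⟩
    simp_rw [hk, zpow_natCast] at hge
    have : AnalyticAt ℂ (fun z => (z - s) ^ k * g z) s :=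
      ((analyticAt_id.sub analyticAt_const).pow k).mul hga
    exact this.congr (hge.mono fun z hz => hz.symm)
  · intro s hs hsP
    obtain ⟨g, -, hg0, hge⟩ := hlocal s hs
    rw [hge.self_of_nhds, sub_self]
    by_cases h : s ∈ SZ
    · have h1 : d s ≠ 0 := by
        rw [hdZ s h]
        exact_mod_cast (Nat.one_le_iff_ne_zero.1 (hmZ s h))
      simp [h, zero_zpow _ h1]
    · simp [h, hd0 s h hsP, hg0]
  · intro s hs
    obtain ⟨g, hga, hg0, hge⟩ := hlocal s (hZstrip s hs).1
    refine ⟨g, hga, hg0, ?_⟩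
    simpa only [hdZ s hs, zpow_natCast] using hge
  · intro s hs
    obtain ⟨g, hga, hg0, hge⟩ := hlocal s (hPstrip s hs).1
    refine ⟨g, hga, hg0, ?_⟩
    rw [hdP s hs] at hge
    exact hge.filter_mono nhdsWithin_le_nhds
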